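/- Let n ≥ 1, α > 0 and 1 < q ≤ 1 + α/n. Suppose the coefficients a_{ij} satisfy condition (8) with this α and some c > 0. Let (u,v) be a pair of functions, continuous on [0,∞) × ℝⁿ and C¹ on S with |u|^q, |v|^q locally integrable on S, whose restriction to S is an entire weak solution of u_t − Lu − |u|^{q−1}u ≥ v_t − Lv − |v|^{q−1}v, with arbitrary initial data u(0,·) and v(0,·). If u ≥ v on S, then u = v in S. -/

import Mathlib

open MeasureTheory Real

noncomputable section

/-- Euclidean space ℝⁿ. -/
abbrev Xn (n : ℕ) : Type := EuclideanSpace ℝ (Fin n)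

/-- Points of the half-space `S = (0,∞) × ℝⁿ`. -/
abbrev Pt (n : ℕ) : Type := ℝ × Xn n

/-- The half-space `S = (0,∞) × ℝⁿ`. -/
def halfSpace (n : ℕ) : Set (Pt n) := {p | 0 < p.1}

/-- Partial derivative in the time variable. -/
noncomputable def pdT {n : ℕ} (w : Pt n → ℝ) (p : Pt n) : ℝ :=
  fderiv ℝ w p (1, 0)

/-- Partial derivative in the space variable `x_j`. -/
noncomputable def pdX {n : ℕ} (w : Pt n → ℝ) (j : Fin n) (p : Pt n) : ℝ :=
  fderiv ℝ w p (0, EuclideanSpace.single j 1)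

/-- The odd power function `x ↦ |x|^{q-1} x`. -/
noncomputable def oddPow (q x : ℝ) : ℝ := |x| ^ (q - 1) * x

/-- Condition (8): `𝒜(R) ≤ c R^{2-α}` for all `R > 1`, expressed as an a.e. bound
on the majorant `A` over the region `{(t,x) : t > 0, R/2 < |x| < R}`. -/
def Cond8 {n : ℕ} (A : Pt n → ℝ) (α c : ℝ) : Prop :=
  ∀ R : ℝ, 1 < R →
    ∀ᵐ p ∂(volume.restrict
        {p : Pt n | 0 < p.1 ∧ R / 2 < ‖p.2‖ ∧ ‖p.2‖ < R}),
      A p ≤ c * R ^ (2 - α)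

/-- `u` is an entire weak solution of `u_t ≥ Lu + |u|^{q−1}u` in `S`. -/
def WeakSuperSol {n : ℕ} (a : Fin n → Fin n → Pt n → ℝ) (q : ℝ)
    (u : Pt n → ℝ) : Prop :=
  ∀ φ : Pt n → ℝ, ContDiff ℝ (⊤ : ℕ∞) φ → HasCompactSupport φ →
    tsupport φ ⊆ halfSpace n → (∀ p, 0 ≤ φ p) →
    0 ≤ ∫ p in halfSpace n,
        (pdT u p * φ p + ∑ i, ∑ j, a i j p * pdX φ i p * pdX u j p
          - oddPow q (u p) * φ p)

/-- `v` is an entire weak solution of `v_t ≤ Lv + |v|^{q−1}v` in `S`. -/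
def WeakSubSol {n : ℕ} (a : Fin n → Fin n → Pt n → ℝ) (q : ℝ)
    (v : Pt n → ℝ) : Prop :=
  ∀ φ : Pt n → ℝ, ContDiff ℝ (⊤ : ℕ∞) φ → HasCompactSupport φ →
    tsupport φ ⊆ halfSpace n → (∀ p, 0 ≤ φ p) →
    ∫ p in halfSpace n,
        (pdT v p * φ p + ∑ i, ∑ j, a i j p * pdX φ i p * pdX v j p
          - oddPow q (v p) * φ p) ≤ 0

/-- `(u,v)` is an entire weak solution of
`u_t − Lu − |u|^{q−1}u ≥ v_t − Lv − |v|^{q−1}v` in `S`. -/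
def WeakSolPair {n : ℕ} (a : Fin n → Fin n → Pt n → ℝ) (q : ℝ)
    (u v : Pt n → ℝ) : Prop :=
  ∀ φ : Pt n → ℝ, ContDiff ℝ (⊤ : ℕ∞) φ → HasCompactSupport φ →
    tsupport φ ⊆ halfSpace n → (∀ p, 0 ≤ φ p) →
    ∫ p in halfSpace n,
        (pdT u p * φ p + ∑ i, ∑ j, a i j p * pdX φ i p * pdX u j p
          - oddPow q (u p) * φ p) ≥
    ∫ p in halfSpace n,
        (pdT v p * φ p + ∑ i, ∑ j, a i j p * pdX φ i p * pdX v j p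
          - oddPow q (v p) * φ p)

/-!
The difference `w = u - v` is a nonnegative supersolution of the linear equation with source
`h = |u|^{q-1}u - |v|^{q-1}v ≥ 2^{1-q} w^q`. Test it with `ζ ψ(w)`, where `ζ = θ χ^k` is a cutoff
adapted to `t ≤ R^α`, `|x| ≤ R`, and `ψ(y) = 1 + (1 + y)^{-s}` takes values in `[1, 2]` and is
decreasing, so that the elliptic term gains a negative multiple of `ζ a∇w·∇w` which absorbs the
cross terms with `∇ζ`. The time term is integrated by parts against a primitive of `ψ`, and since
the ramp `θ` is nondecreasing it contributes with the good sign near `t = 0`; this is why no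
initial condition is needed. Young's inequality then bounds `∫ ζ h` by the part of `∫ ζ w^q` where
`ζ` is cut off, plus a multiple of `R^n`. Applying this to `w / m` with `m = δ R^{-α/(q-1)}` makes
the remainder at most `M δ`, exactly because `n (q - 1) ≤ α`. With `δ = 1` this shows
`θ w^q ∈ L¹(S)`, so the cut-off part tends to `0` as `R → ∞`, and finally `δ → 0` gives `w = 0`.
-/

section OddPow

variable {q x y : ℝ}

lemma add_rpow_le_two_rpow_mul (hx : 0 ≤ x) (hy : 0 ≤ y) (hq : 1 ≤ q) :
    (x + y) ^ q ≤ 2 ^ (q - 1) * (x ^ q + y ^ q) := by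
  lift x to NNReal using hx
  lift y to NNReal using hy
  exact_mod_cast NNReal.rpow_add_le_mul_rpow_add_rpow x y hq

lemma oddPow_of_nonneg (hq : q ≠ 0) (hx : 0 ≤ x) : oddPow q x = x ^ q := by
  rw [oddPow, abs_of_nonneg hx, ← Real.rpow_add_one' hx (by simpa using hq), sub_add_cancel]

lemma oddPow_neg (q x : ℝ) : oddPow q (-x) = -oddPow q x := by
  simp only [oddPow, abs_neg, mul_neg]

lemma continuous_oddPow (hq : 1 ≤ q) : Continuous (oddPow q) :=
  (continuous_abs.rpow_const fun _ => Or.inr (sub_nonneg.2 hq)).mul continuous_id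

lemma sub_rpow_le_oddPow_sub_of_nonneg (hq : 1 ≤ q) (hy : 0 ≤ y) (hxy : y ≤ x) :
    (x - y) ^ q ≤ oddPow q x - oddPow q y := by
  have hq0 : q ≠ 0 := by positivity
  have superadd := Real.add_rpow_le_rpow_add (sub_nonneg.2 hxy) hy hq
  rw [sub_add_cancel] at superadd
  rw [oddPow_of_nonneg hq0 (hy.trans hxy), oddPow_of_nonneg hq0 hy]
  linarith

lemma two_rpow_mul_sub_rpow_le_oddPow_sub (hq : 1 ≤ q) (hxy : y ≤ x) :
    2 ^ (1 - q) * (x - y) ^ q ≤ oddPow q x - oddPow q y := by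
  have weaken : 2 ^ (1 - q) * (x - y) ^ q ≤ (x - y) ^ q :=
    mul_le_of_le_one_left (Real.rpow_nonneg (sub_nonneg.2 hxy) q)
      (Real.rpow_le_one_of_one_le_of_nonpos one_le_two (sub_nonpos.2 hq))
  rcases le_total 0 y with hy | hy
  · exact weaken.trans (sub_rpow_le_oddPow_sub_of_nonneg hq hy hxy)
  rcases le_total x 0 with hx | hx
  · have reflected := sub_rpow_le_oddPow_sub_of_nonneg hq (neg_nonneg.2 hx) (neg_le_neg hxy)
    rw [neg_sub_neg, oddPow_neg, oddPow_neg, neg_sub_neg] at reflected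
    exact weaken.trans reflected
  · have hq0 : q ≠ 0 := by positivity
    have split := add_rpow_le_two_rpow_mul hx (neg_nonneg.2 hy) hq
    rw [← oddPow_of_nonneg hq0 hx, ← oddPow_of_nonneg hq0 (neg_nonneg.2 hy), oddPow_neg] at split
    rw [← neg_sub, Real.rpow_neg zero_le_two, inv_mul_le_iff₀ (by positivity)]
    simpa only [sub_eq_add_neg] using split

end OddPow

section Young

lemma exists_le_mul_rpow_add {r ε : ℝ} (hr : 1 < r) (hε : 0 < ε) :
    ∃ C, 0 ≤ C ∧ ∀ t, 0 ≤ t → t ≤ ε * t ^ r + C := by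
  have grows : Filter.Tendsto (fun t : ℝ => ε * t ^ (r - 1)) Filter.atTop Filter.atTop :=
    (tendsto_rpow_atTop (sub_pos.2 hr)).const_mul_atTop hε
  obtain ⟨C, hC⟩ := Filter.eventually_atTop.1 (grows.eventually_ge_atTop 1)
  refine ⟨max C 0, le_max_right C 0, fun t ht => ?_⟩
  rcases le_total t C with h | h
  · have : 0 ≤ ε * t ^ r := by positivity
    linarith [le_max_left C 0]
  · have absorb : t ≤ ε * t ^ r := calc
      t ≤ ε * t ^ (r - 1) * t := le_mul_of_one_le_left ht (hC t h)
      _ = ε * t ^ r := by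
        rw [mul_assoc, ← Real.rpow_add_one' ht (by linarith), sub_add_cancel]
    linarith [le_max_right C 0]

/-- Young's inequality with a cutoff `χ`: a large power of `χ` on the left supplies the slightly
larger power needed on the right. -/
lemma exists_one_add_rpow_mul_pow_le {p q e : ℝ} {l : ℕ} (hp : 0 < p) (hpq : p < q) (hq : 1 ≤ q)
    (he : 0 < e) (hl : (l + 2) * p ≤ l * q) :
    ∃ C, 0 ≤ C ∧ ∀ y, 0 ≤ y → ∀ χ ∈ Set.Icc (0 : ℝ) 1,
      (1 + y) ^ p * χ ^ l ≤ e * (y ^ q * χ ^ (l + 2)) + C := by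
  obtain ⟨C, hC0, hC⟩ := exists_le_mul_rpow_add ((one_lt_div hp).2 hpq)
    (show 0 < e / 2 ^ (q - 1) by positivity)
  refine ⟨e + C, by positivity, fun y hy χ ⟨hχ0, hχ1⟩ => ?_⟩
  have hy1 : 0 ≤ 1 + y := by positivity
  have cutoff_power : (χ ^ l) ^ (q / p) ≤ χ ^ (l + 2) := by
    rw [← Real.rpow_natCast, ← Real.rpow_mul hχ0, ← Real.rpow_natCast χ (l + 2)]
    refine Real.rpow_le_rpow_of_exponent_ge' hχ0 hχ1 (Nat.cast_nonneg _) ?_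
    rw [← mul_div_assoc, le_div_iff₀ hp]
    exact_mod_cast hl
  have power : ((1 + y) ^ p * χ ^ l) ^ (q / p) ≤ (1 + y) ^ q * χ ^ (l + 2) := by
    rw [Real.mul_rpow (by positivity) (by positivity), ← Real.rpow_mul hy1,
      mul_div_cancel₀ q hp.ne']
    gcongr
  calc (1 + y) ^ p * χ ^ l
      ≤ e / 2 ^ (q - 1) * ((1 + y) ^ p * χ ^ l) ^ (q / p) + C := hC _ (by positivity)
    _ ≤ e / 2 ^ (q - 1) * (2 ^ (q - 1) * (1 + y ^ q) * χ ^ (l + 2)) + C := by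
        gcongr
        refine power.trans ?_
        gcongr
        simpa using add_rpow_le_two_rpow_mul zero_le_one hy hq
    _ = e * (y ^ q * χ ^ (l + 2)) + (e * χ ^ (l + 2) + C) := by field_simp; ring
    _ ≤ e * (y ^ q * χ ^ (l + 2)) + (e + C) := by
        gcongr
        exact mul_le_of_le_one_right he.le (pow_le_one₀ hχ0 hχ1)

end Young

section Damping

/-- The decreasing weight `1 + (1 + y)^(-s)`. Multiplying a cutoff by `damping s w` gives the test
function for `w`: the derivative of the weight has a sign, which produces an energy term, while the
constant `1` keeps the weight bounded below. -/
def damping (s y : ℝ) : ℝ := 1 + (1 + y) ^ (-s)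

/-- The primitive of `damping s` vanishing at `0`, for `s ≠ 1`. -/
def dampingPrimitive (s y : ℝ) : ℝ := y + ((1 + y) ^ (1 - s) - 1) / (1 - s)

variable {s y : ℝ}

lemma hasDerivAt_damping (hy : 0 ≤ y) :
    HasDerivAt (damping s) (-(s * (1 + y) ^ (-s - 1))) y := by
  have h := (((hasDerivAt_id' y).const_add 1).rpow_const (p := -s)
    (Or.inl (by positivity))).const_add 1
  exact h.congr_deriv (by rw [one_mul, neg_mul])

lemma hasDerivAt_dampingPrimitive (hs : s ≠ 1) (hy : 0 ≤ y) :
    HasDerivAt (dampingPrimitive s) (damping s y) y := by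
  have h := (hasDerivAt_id' y).add (((((hasDerivAt_id' y).const_add 1).rpow_const (p := 1 - s)
    (Or.inl (by positivity))).sub_const 1).div_const (1 - s))
  have hs' : 1 - s ≠ 0 := sub_ne_zero.2 hs.symm
  refine h.congr_deriv ?_
  rw [one_mul, mul_div_cancel_left₀ _ hs', sub_sub_cancel_left, damping]

lemma contDiffOn_damping : ContDiffOn ℝ 1 (damping s) (Set.Ici 0) := fun y hy =>
  (contDiffAt_const.add ((contDiffAt_const.add contDiffAt_id).rpow_const_of_ne
    (by simp only [id]; have : 0 ≤ y := hy; positivity))).contDiffWithinAt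

lemma contDiffOn_dampingPrimitive : ContDiffOn ℝ 1 (dampingPrimitive s) (Set.Ici 0) := fun y hy =>
  (contDiffAt_id.add ((((contDiffAt_const.add contDiffAt_id).rpow_const_of_ne
    (by simp only [id]; have : 0 ≤ y := hy; positivity)).sub contDiffAt_const).div_const
      _)).contDiffWithinAt

lemma one_le_damping (hy : 0 ≤ y) : 1 ≤ damping s y :=
  le_add_of_nonneg_right (by positivity)

lemma damping_le_two (hs : 0 ≤ s) (hy : 0 ≤ y) : damping s y ≤ 2 := by
  have : (1 + y) ^ (-s) ≤ 1 :=
    Real.rpow_le_one_of_one_le_of_nonpos (le_add_of_nonneg_right hy) (neg_nonpos.2 hs)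
  rw [damping]
  linarith

lemma dampingPrimitive_nonneg (hs : s ≤ 1) (hy : 0 ≤ y) : 0 ≤ dampingPrimitive s y := by
  have : 1 ≤ (1 + y) ^ (1 - s) :=
    Real.one_le_rpow (le_add_of_nonneg_right hy) (sub_nonneg.2 hs)
  exact add_nonneg hy (div_nonneg (sub_nonneg.2 this) (sub_nonneg.2 hs))

lemma dampingPrimitive_le (hs0 : 0 ≤ s) (hs1 : s < 1) (hy : 0 ≤ y) :
    dampingPrimitive s y ≤ 2 * y := by
  have bernoulli := rpow_one_add_le_one_add_mul_self (s := y) (p := 1 - s) (by linarith)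
    (by linarith) (by linarith)
  have : ((1 + y) ^ (1 - s) - 1) / (1 - s) ≤ y := by
    rw [div_le_iff₀' (sub_pos.2 hs1)]
    linarith
  rw [dampingPrimitive]
  linarith

end Damping

section Mollification

open scoped Convolution

variable {E : Type*} [NormedAddCommGroup E] [NormedSpace ℝ E] [FiniteDimensional ℝ E]
  [MeasurableSpace E] [BorelSpace E] {μ : Measure E} [μ.IsAddHaarMeasure] {φ : E → ℝ}

lemma tsupport_normed_convolution_subset (ρ : ContDiffBump (0 : E)) :
    tsupport (ρ.normed μ ⋆[ContinuousLinearMap.lsmul ℝ ℝ, μ] φ) ⊆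
      Metric.cthickening ρ.rOut (tsupport φ) := by
  refine closure_minimal ((support_convolution_subset _).trans ?_) Metric.isClosed_cthickening
  rw [ρ.support_normed_eq]
  rintro _ ⟨x, hx, y, hy, rfl⟩
  refine Metric.mem_cthickening_of_dist_le _ y _ _ (subset_tsupport _ hy) ?_
  simpa using (mem_ball_zero_iff.1 hx).le

lemma fderiv_normed_convolution (ρ : ContDiffBump (0 : E)) (hφ : ContDiff ℝ 1 φ)
    (hφs : HasCompactSupport φ) :
    fderiv ℝ (ρ.normed μ ⋆[ContinuousLinearMap.lsmul ℝ ℝ, μ] φ) =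
      ρ.normed μ ⋆[ContinuousLinearMap.lsmul ℝ ℝ, μ] fderiv ℝ φ :=
  funext fun p => (hφs.hasFDerivAt_convolution_right (ContinuousLinearMap.lsmul ℝ ℝ)
    ρ.continuous_normed.locallyIntegrable hφ p).fderiv

lemma exists_contDiffBump_dist_convolution_le {F : Type*} [NormedAddCommGroup F] [NormedSpace ℝ F]
    [CompleteSpace F] {f : E → F} (hf : Continuous f) (hfs : HasCompactSupport f) {ε : ℝ}
    (hε : 0 < ε) :
    ∃ η > 0, ∀ ρ : ContDiffBump (0 : E), ρ.rOut ≤ η → ∀ p,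
      dist ((ρ.normed μ ⋆[ContinuousLinearMap.lsmul ℝ ℝ, μ] f) p) (f p) ≤ ε := by
  obtain ⟨η, hη, hfη⟩ :=
    Metric.uniformContinuous_iff.1 (hfs.uniformContinuous_of_continuous hf) ε hε
  exact ⟨η, hη, fun ρ hρ p => ρ.dist_normed_convolution_le hf.aestronglyMeasurable fun x hx =>
    (hfη ((Metric.mem_ball.1 hx).trans_le hρ)).le⟩

lemma exists_contDiff_approx_fderiv (hφ : ContDiff ℝ 1 φ) (hφs : HasCompactSupport φ)
    (hφ0 : ∀ p, 0 ≤ φ p) {δ ε : ℝ} (hδ : 0 < δ) (hε : 0 < ε) :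
    ∃ ψ : E → ℝ, ContDiff ℝ (⊤ : ℕ∞) ψ ∧ (∀ p, 0 ≤ ψ p) ∧
      tsupport ψ ⊆ Metric.cthickening δ (tsupport φ) ∧
      (∀ p, |ψ p - φ p| ≤ ε) ∧ ∀ p, ‖fderiv ℝ ψ p - fderiv ℝ φ p‖ ≤ ε := by
  let μ : Measure E := Measure.addHaar
  obtain ⟨η₀, hη₀, hval⟩ :=
    exists_contDiffBump_dist_convolution_le (μ := μ) hφ.continuous hφs hε
  obtain ⟨η₁, hη₁, hderiv⟩ := exists_contDiffBump_dist_convolution_le (μ := μ)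
    (hφ.continuous_fderiv one_ne_zero) (hφs.fderiv ℝ) hε
  let r := min δ (min η₀ η₁)
  have hr : 0 < r := by positivity
  let ρ : ContDiffBump (0 : E) := ⟨r / 2, r, half_pos hr, half_lt_self hr⟩
  have hρδ : ρ.rOut ≤ δ := min_le_left _ _
  have hρ₀ : ρ.rOut ≤ η₀ := (min_le_right _ _).trans (min_le_left _ _)
  have hρ₁ : ρ.rOut ≤ η₁ := (min_le_right _ _).trans (min_le_right _ _)
  refine ⟨ρ.normed μ ⋆[ContinuousLinearMap.lsmul ℝ ℝ, μ] φ,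
    ρ.hasCompactSupport_normed.contDiff_convolution_left _ ρ.contDiff_normed
      hφ.continuous.locallyIntegrable,
    fun p => integral_nonneg fun x => mul_nonneg (ρ.nonneg_normed x) (hφ0 _),
    (tsupport_normed_convolution_subset ρ).trans (Metric.cthickening_mono hρδ _),
    hval ρ hρ₀, fun p => ?_⟩
  rw [fderiv_normed_convolution ρ hφ hφs, ← dist_eq_norm]
  exact hderiv ρ hρ₁ p

end Mollification

section Distribution

lemma locallyIntegrableOn_finset_sum {ι X F : Type*} [TopologicalSpace X] [MeasurableSpace X]
    [NormedAddCommGroup F] {μ : Measure X} {U : Set X} (s : Finset ι) {f : ι → X → F}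
    (hf : ∀ i ∈ s, LocallyIntegrableOn (f i) U μ) :
    LocallyIntegrableOn (fun p => ∑ i ∈ s, f i p) U μ := by
  simp only [← Finset.sum_apply]
  exact Finset.sum_induction f (LocallyIntegrableOn · U μ)
    (fun _ _ => LocallyIntegrableOn.add) locallyIntegrableOn_zero hf

variable {E : Type*} [NormedAddCommGroup E] [MeasurableSpace E] [BorelSpace E]
  {μ : Measure E} {U : Set E} {b φ : E → ℝ} {B : E → E}

lemma integrable_bilin_of_locallyIntegrableOn {F₁ F₂ F₃ : Type*}
    [NormedAddCommGroup F₁] [NormedSpace ℝ F₁] [SecondCountableTopologyEither E F₁]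
    [NormedAddCommGroup F₂] [NormedSpace ℝ F₂] [NormedAddCommGroup F₃] [NormedSpace ℝ F₃]
    (L : F₁ →L[ℝ] F₂ →L[ℝ] F₃) {f : E → F₁} {g : E → F₂} (hf : Continuous f)
    (hfs : HasCompactSupport f) (hfU : tsupport f ⊆ U) (hg : LocallyIntegrableOn g U μ) :
    Integrable (fun p => L (f p) (g p)) μ := by
  obtain ⟨C, hC⟩ := hfs.exists_bound_of_continuous hf
  refine (integrableOn_iff_integrable_of_support_subset (s := tsupport f) fun p hp => ?_).1
    (L.integrable_of_bilin_of_bdd_left C hf.aestronglyMeasurable (ae_of_all _ hC)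
      (hg.integrableOn_compact_subset hfU hfs))
  refine subset_tsupport f fun h => hp ?_
  simp only [h, map_zero, zero_apply]

variable [NormedSpace ℝ E] [FiniteDimensional ℝ E]

lemma integrable_mul_add_fderiv (hb : LocallyIntegrableOn b U μ) (hB : LocallyIntegrableOn B U μ)
    (hφ : ContDiff ℝ 1 φ) (hφs : HasCompactSupport φ) (hφU : tsupport φ ⊆ U) :
    Integrable (fun p => b p * φ p + fderiv ℝ φ p (B p)) μ := by
  have value := integrable_bilin_of_locallyIntegrableOn (ContinuousLinearMap.mul ℝ ℝ).flip
    hφ.continuous hφs hφU hb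
  exact value.add <| integrable_bilin_of_locallyIntegrableOn (ContinuousLinearMap.id ℝ _)
    (hφ.continuous_fderiv one_ne_zero) (hφs.fderiv ℝ) ((tsupport_fderiv_subset ℝ).trans hφU) hB

/-- The distribution `b - div B` is nonnegative on the open set `U`, when tested against `C^k`
functions. -/
def IsDistribNonneg (k : WithTop ℕ∞) (U : Set E) (b : E → ℝ) (B : E → E) (μ : Measure E) : Prop :=
  ∀ φ : E → ℝ, ContDiff ℝ k φ → HasCompactSupport φ → tsupport φ ⊆ U → (∀ p, 0 ≤ φ p) →
    0 ≤ ∫ p in U, (b p * φ p + fderiv ℝ φ p (B p)) ∂μ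

lemma setIntegral_mul_add_fderiv_le {K : Set E} {ε : ℝ} (hU : IsOpen U) (hK : IsCompact K)
    (hKU : K ⊆ U) (hb : LocallyIntegrableOn b U μ) (hB : LocallyIntegrableOn B U μ)
    (hφ : ContDiff ℝ 1 φ) (hφK : tsupport φ ⊆ K) (hval : ∀ p, |φ p| ≤ ε)
    (hderiv : ∀ p, ‖fderiv ℝ φ p‖ ≤ ε) :
    ∫ p in U, (b p * φ p + fderiv ℝ φ p (B p)) ∂μ ≤ ε * ∫ p in K, (‖b p‖ + ‖B p‖) ∂μ := by
  have hφs : HasCompactSupport φ := hK.of_isClosed_subset (isClosed_tsupport φ) hφK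
  have vanish : ∀ p ∈ U \ K, b p * φ p + fderiv ℝ φ p (B p) = 0 := fun p hp => by
    have hp' : p ∉ tsupport φ := fun h => hp.2 (hφK h)
    rw [image_eq_zero_of_notMem_tsupport hp', fderiv_of_notMem_tsupport ℝ hp', mul_zero,
      zero_apply, add_zero]
  rw [setIntegral_eq_of_subset_of_forall_sdiff_eq_zero hU.measurableSet hKU vanish,
    ← integral_const_mul]
  refine integral_mono
    (integrable_mul_add_fderiv hb hB hφ hφs (hφK.trans hKU)).integrableOn
    (((hb.integrableOn_compact_subset hKU hK).norm.add
      (hB.integrableOn_compact_subset hKU hK).norm).const_mul ε) fun p => ?_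
  rw [mul_add, mul_comm (b p)]
  refine add_le_add ((le_abs_self _).trans ?_) ((le_abs_self _).trans ?_)
  · rw [abs_mul]
    exact mul_le_mul_of_nonneg_right (hval p) (abs_nonneg _)
  · exact (fderiv ℝ φ p).le_of_opNorm_le (hderiv p) (B p)

lemma IsDistribNonneg.of_smooth (hU : IsOpen U)
    (hb : LocallyIntegrableOn b U μ) (hB : LocallyIntegrableOn B U μ)
    (h : IsDistribNonneg (⊤ : ℕ∞) U b B μ) : IsDistribNonneg 1 U b B μ := by
  intro φ hφ hφs hφU hφ0
  obtain ⟨δ, hδ, hδU⟩ := hφs.isCompact.exists_cthickening_subset_open hU hφU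
  set K := Metric.cthickening δ (tsupport φ)
  have hK : IsCompact K := hφs.isCompact.cthickening
  set C := ∫ p in K, (‖b p‖ + ‖B p‖) ∂μ
  have C_nonneg : 0 ≤ C := integral_nonneg fun p => by positivity
  refine le_of_forall_pos_le_add fun ε hε => ?_
  obtain ⟨ψ, hψ, hψ0, hψK, hval, hderiv⟩ :=
    exists_contDiff_approx_fderiv hφ hφs hφ0 hδ
      (div_pos hε (add_pos_of_nonneg_of_pos C_nonneg one_pos))
  have hψ1 : ContDiff ℝ 1 ψ := hψ.of_le (by exact_mod_cast le_top)
  have hψs : HasCompactSupport ψ := hK.of_isClosed_subset (isClosed_tsupport ψ) hψK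
  have fderiv_error (p : E) : fderiv ℝ (ψ - φ) p = fderiv ℝ ψ p - fderiv ℝ φ p :=
    fderiv_sub (hψ1.differentiable one_ne_zero p) (hφ.differentiable one_ne_zero p)
  calc 0 ≤ ∫ p in U, (b p * ψ p + fderiv ℝ ψ p (B p)) ∂μ :=
        h ψ hψ hψs (hψK.trans hδU) hψ0
    _ = ∫ p in U, (b p * φ p + fderiv ℝ φ p (B p)) ∂μ +
          ∫ p in U, (b p * (ψ - φ) p + fderiv ℝ (ψ - φ) p (B p)) ∂μ := by
        have integrable_error := integrable_mul_add_fderiv hb hB (hψ1.sub hφ) (hψs.sub hφs)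
          ((tsupport_sub ψ φ).trans (Set.union_subset (hψK.trans hδU) hφU))
        refine Eq.trans ?_ (integral_add (integrable_mul_add_fderiv hb hB hφ hφs hφU).integrableOn
          integrable_error.integrableOn)
        congr with p
        rw [fderiv_error, Pi.sub_apply, sub_apply]
        ring
    _ ≤ ∫ p in U, (b p * φ p + fderiv ℝ φ p (B p)) ∂μ + ε / (C + 1) * C := by
        gcongr
        exact setIntegral_mul_add_fderiv_le hU hK hδU hb hB (hψ1.sub hφ)
          ((tsupport_sub ψ φ).trans (Set.union_subset hψK (Metric.self_subset_cthickening _)))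
          hval fun p => (fderiv_error p).symm ▸ hderiv p
    _ ≤ ∫ p in U, (b p * φ p + fderiv ℝ φ p (B p)) ∂μ + ε := by
        gcongr
        rw [div_mul_eq_mul_div, div_le_iff₀ (by positivity)]
        gcongr
        linarith

end Distribution

section Cutoff

variable {E : Type*} [NormedAddCommGroup E] [NormedSpace ℝ E]

lemma contDiff_mul_of_tsupport_subset {k : WithTop ℕ∞} {U : Set E} {ζ f : E → ℝ}
    (hζ : ContDiff ℝ k ζ) (hU : IsOpen U) (hζU : tsupport ζ ⊆ U) (hf : ContDiffOn ℝ k f U) :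
    ContDiff ℝ k (fun p => ζ p * f p) := by
  refine contDiff_iff_contDiffAt.2 fun p => ?_
  by_cases hp : p ∈ U
  · exact hζ.contDiffAt.mul (hf.contDiffAt (hU.mem_nhds hp))
  · have hζp := notMem_tsupport_iff_eventuallyEq.1 fun h => hp (hζU h)
    refine (contDiffAt_const (c := 0)).congr_of_eventuallyEq (hζp.mono fun x hx => ?_)
    simp only [hx, Pi.zero_apply, zero_mul]

lemma integral_fderiv_apply_eq_zero [FiniteDimensional ℝ E] [MeasurableSpace E] [BorelSpace E]
    {μ : Measure E} [μ.IsAddHaarMeasure] {F : E → ℝ} (hF : ContDiff ℝ 1 F)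
    (hFs : HasCompactSupport F) (v : E) : ∫ p, fderiv ℝ F p v ∂μ = 0 := by
  have hderiv : Integrable (fun p => fderiv ℝ F p v) μ :=
    ((hF.continuous_fderiv one_ne_zero).clm_apply continuous_const).integrable_of_hasCompactSupport
      (hFs.fderiv_apply ℝ v)
  have parts := integral_mul_fderiv_eq_neg_fderiv_mul_of_integrable (μ := μ) (f := F)
    (g := fun _ => 1) (v := v) (by simpa using hderiv) (by simp)
    (by simpa using hF.continuous.integrable_of_hasCompactSupport hFs)
    (fun p _ => hF.differentiable one_ne_zero p) fun _ _ => differentiableAt_const _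
  simpa using parts

end Cutoff

section HalfSpace

variable {n : ℕ} {a : Fin n → Fin n → Pt n → ℝ} {u v w φ : Pt n → ℝ} {p : Pt n}

lemma isOpen_halfSpace (n : ℕ) : IsOpen (halfSpace n) :=
  isOpen_lt continuous_const continuous_fst

instance isAddHaarMeasure_volume_Pt (n : ℕ) : (volume : Measure (Pt n)).IsAddHaarMeasure :=
  inferInstanceAs ((volume : Measure ℝ).prod (volume : Measure (Xn n))).IsAddHaarMeasure

/-- The spatial gradient of `w` at `p`. -/
def gradX (w : Pt n → ℝ) (p : Pt n) : Fin n → ℝ := fun j => pdX w j p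

/-- The quadratic form `∑ a_{ij}(p) ξ_i η_j` of the operator `L` at the point `p`. -/
def coeffForm (a : Fin n → Fin n → Pt n → ℝ) (p : Pt n) : LinearMap.BilinForm ℝ (Fin n → ℝ) :=
  Matrix.toBilin' (Matrix.of fun i j => a i j p)

/-- The space-time vector field `(0, a ∇w)`, for which `L w` is the divergence of `flux a w`. -/
def flux (a : Fin n → Fin n → Pt n → ℝ) (w : Pt n → ℝ) (p : Pt n) : Pt n :=
  ∑ i, ∑ j, (pdX w j p * a i j p) • ((0, EuclideanSpace.single i 1) : Pt n)

lemma coeffForm_apply (ξ η : Fin n → ℝ) :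
    coeffForm a p ξ η = ∑ i, ∑ j, a i j p * ξ i * η j := by
  simp only [coeffForm, Matrix.toBilin'_apply, Matrix.of_apply, mul_comm (ξ _)]

lemma fderiv_flux : fderiv ℝ φ p (flux a w p) = coeffForm a p (gradX φ p) (gradX w p) := by
  simp only [flux, map_sum, map_smul, smul_eq_mul, coeffForm_apply, gradX]
  refine Finset.sum_congr rfl fun i _ => Finset.sum_congr rfl fun j _ => ?_
  rw [← pdX]
  ring

lemma fderiv_zero_prod (ξ : Xn n) : fderiv ℝ w p (0, ξ) = ∑ j, ξ j * gradX w p j := by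
  let D : Xn n →L[ℝ] ℝ := (fderiv ℝ w p).comp (ContinuousLinearMap.inr ℝ ℝ (Xn n))
  calc fderiv ℝ w p (0, ξ) = D (∑ j, ξ j • EuclideanSpace.basisFun (Fin n) ℝ j) :=
        congrArg D ((EuclideanSpace.basisFun (Fin n) ℝ).sum_repr ξ).symm
    _ = ∑ j, ξ j * gradX w p j := by
        simp only [map_sum, map_smul, smul_eq_mul, EuclideanSpace.basisFun_apply]
        rfl

lemma norm_gradX_le {C : ℝ} (hC : 0 ≤ C) (h : ∀ ξ : Xn n, |fderiv ℝ w p (0, ξ)| ≤ C * ‖ξ‖) :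
    ‖WithLp.toLp 2 (gradX w p)‖ ≤ C := by
  set ξ : Xn n := WithLp.toLp 2 (gradX w p)
  have hsq : ‖ξ‖ * ‖ξ‖ ≤ C * ‖ξ‖ := by
    rw [← sq, EuclideanSpace.real_norm_sq_eq]
    refine le_of_eq_of_le ?_ ((le_abs_self _).trans (h ξ))
    rw [fderiv_zero_prod]
    exact Finset.sum_congr rfl fun j _ => sq _
  rcases (norm_nonneg ξ).eq_or_lt with hξ | hξ
  · exact hξ ▸ hC
  · exact le_of_mul_le_mul_right hsq hξ

lemma continuousOn_pdT (hw : ContDiffOn ℝ 1 w (halfSpace n)) : ContinuousOn (pdT w) (halfSpace n) :=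
  (hw.continuousOn_fderiv_of_isOpen (isOpen_halfSpace n) le_rfl).clm_apply continuousOn_const

lemma continuousOn_pdX (hw : ContDiffOn ℝ 1 w (halfSpace n)) (j : Fin n) :
    ContinuousOn (pdX w j) (halfSpace n) :=
  (hw.continuousOn_fderiv_of_isOpen (isOpen_halfSpace n) le_rfl).clm_apply continuousOn_const

lemma locallyIntegrableOn_flux (ha : ∀ i j, LocallyIntegrableOn (a i j) (halfSpace n))
    (hw : ContDiffOn ℝ 1 w (halfSpace n)) : LocallyIntegrableOn (flux a w) (halfSpace n) := by
  refine locallyIntegrableOn_finset_sum _ fun i _ => locallyIntegrableOn_finset_sum _ fun j _ => ?_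
  exact (ContinuousLinearMap.toSpanSingleton ℝ _).locallyIntegrableOn_comp
    ((ha i j).continuousOn_mul (continuousOn_pdX hw j) (isOpen_halfSpace n).isLocallyClosed)

end HalfSpace

section EnergyDensity

lemma bilinForm_apply_le_of_isPosSemidef {M : Type*} [AddCommGroup M] [Module ℝ M]
    {B : LinearMap.BilinForm ℝ M} (hB : B.IsPosSemidef) (x y : M) {c : ℝ} (hc : 0 < c) :
    B x y ≤ c * B y y + (4 * c)⁻¹ * B x x := by
  have square : 0 ≤ B (x - (2 * c) • y) (x - (2 * c) • y) := hB.nonneg _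
  have symm : B y x = B x y := (hB.isSymm.eq x y).symm
  simp only [map_sub, map_smul, LinearMap.sub_apply, LinearMap.smul_apply, smul_eq_mul,
    symm] at square
  rw [← sub_nonneg]
  refine (mul_nonneg (show 0 ≤ (4 * c)⁻¹ by positivity) square).trans_eq ?_
  field_simp
  ring

lemma damping_mul_bilinForm_sub_le {M : Type*} [AddCommGroup M] [Module ℝ M]
    {B : LinearMap.BilinForm ℝ M} (hB : B.IsPosSemidef) (x y : M) {s t k c : ℝ} (hs : 0 < s)
    (ht : 0 ≤ t) :
    damping s t * k * c * B x y - s * (1 + t) ^ (-s - 1) * c ^ 2 * B y y ≤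
      (1 + t) ^ (1 + s) * (k ^ 2 / s * B x x) := by
  have ht1 : 0 < 1 + t := by positivity
  have young := bilinForm_apply_le_of_isPosSemidef hB ((damping s t * k) • x) (c • y)
    (c := s * (1 + t) ^ (-s - 1)) (by positivity)
  simp only [map_smul, LinearMap.smul_apply, smul_eq_mul] at young
  have weight : damping s t ^ 2 ≤ 2 ^ 2 :=
    pow_le_pow_left₀ (zero_le_one.trans (one_le_damping ht)) (damping_le_two hs.le ht) 2
  have inv_weight : ((1 + t) ^ (-s - 1))⁻¹ = (1 + t) ^ (1 + s) := by
    rw [← Real.rpow_neg ht1.le]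
    ring_nf
  calc damping s t * k * c * B x y - s * (1 + t) ^ (-s - 1) * c ^ 2 * B y y
      ≤ damping s t ^ 2 * ((4 * (s * (1 + t) ^ (-s - 1)))⁻¹ * (k ^ 2 * B x x)) := by
        linear_combination young
    _ ≤ 2 ^ 2 * ((4 * (s * (1 + t) ^ (-s - 1)))⁻¹ * (k ^ 2 * B x x)) := by
        have := hB.nonneg x
        gcongr
    _ = (1 + t) ^ (1 + s) * (k ^ 2 / s * B x x) := by
        rw [mul_inv, mul_inv, inv_weight]
        ring

lemma neg_mul_dampingPrimitive_mul_le {s t τ χ : ℝ} (hs0 : 0 < s) (hs1 : s < 1) (ht : 0 ≤ t)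
    (hχ0 : 0 ≤ χ) (hχ1 : χ ≤ 1) :
    -(χ * dampingPrimitive s t * τ) ≤ (1 + t) ^ (1 + s) * (2 * |τ|) := by
  have power : t ≤ (1 + t) ^ (1 + s) :=
    (le_add_of_nonneg_left zero_le_one).trans
      (Real.self_le_rpow_of_one_le (le_add_of_nonneg_right ht) (by linarith))
  have primitive : χ * dampingPrimitive s t ≤ 2 * (1 + t) ^ (1 + s) :=
    (mul_le_of_le_one_left (dampingPrimitive_nonneg hs1.le ht) hχ1).trans
      ((dampingPrimitive_le hs0.le hs1 ht).trans (by gcongr))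
  have nonneg : 0 ≤ χ * dampingPrimitive s t :=
    mul_nonneg hχ0 (dampingPrimitive_nonneg hs1.le ht)
  calc -(χ * dampingPrimitive s t * τ) = χ * dampingPrimitive s t * -τ := by ring
    _ ≤ χ * dampingPrimitive s t * |τ| := by gcongr; exact neg_le_abs τ
    _ ≤ 2 * (1 + t) ^ (1 + s) * |τ| := by gcongr
    _ = (1 + t) ^ (1 + s) * (2 * |τ|) := by ring

variable {n : ℕ} {a : Fin n → Fin n → Pt n → ℝ} {w χ h : Pt n → ℝ} {θ : ℝ → ℝ} {s : ℝ} {l : ℕ}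
  {p : Pt n}

/-- The space-time cutoff `θ(t) χ^k`. The time factor `θ` vanishes near `t = 0` and makes no
contribution to the estimates because it is nondecreasing. -/
def cutoffPow (θ : ℝ → ℝ) (χ : Pt n → ℝ) (k : ℕ) (p : Pt n) : ℝ := θ p.1 * χ p ^ k

/-- The cost of the cutoff `χ^k` in the energy estimate for the weight `damping s`. -/
def cutoffCost (a : Fin n → Fin n → Pt n → ℝ) (s : ℝ) (k : ℕ) (χ : Pt n → ℝ) (p : Pt n) : ℝ :=
  2 * k * |pdT χ p| + k ^ 2 / s * coeffForm a p (gradX χ p) (gradX χ p)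

lemma fderiv_cutoffPow (hθ : DifferentiableAt ℝ θ p.1) (hχ : DifferentiableAt ℝ χ p) (k : ℕ) :
    fderiv ℝ (cutoffPow θ χ (k + 1)) p =
      (deriv θ p.1 * χ p ^ (k + 1)) • ContinuousLinearMap.fst ℝ ℝ (Xn n) +
        ((k + 1) * (θ p.1 * χ p ^ k)) • fderiv ℝ χ p := by
  have time_factor : HasFDerivAt (fun p : Pt n => θ p.1)
      (deriv θ p.1 • ContinuousLinearMap.fst ℝ ℝ (Xn n)) p :=
    hθ.hasDerivAt.comp_hasFDerivAt p hasFDerivAt_fst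
  refine ((time_factor.mul (hχ.hasFDerivAt.pow (k + 1))).congr_fderiv ?_).fderiv
  ext v <;> simp <;> ring

lemma fderiv_mul_comp {E : Type*} [NormedAddCommGroup E] [NormedSpace ℝ E] {ζ w : E → ℝ} {p : E}
    {f : ℝ → ℝ} {f' : ℝ} (hζ : DifferentiableAt ℝ ζ p) (hw : DifferentiableAt ℝ w p)
    (hf : HasDerivAt f f' (w p)) :
    fderiv ℝ (fun p => ζ p * f (w p)) p = f (w p) • fderiv ℝ ζ p + (ζ p * f') • fderiv ℝ w p := by
  refine ((hζ.hasFDerivAt.mul (hf.comp_hasFDerivAt p hw.hasFDerivAt)).congr_fderiv ?_).fderiv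
  rw [smul_smul, add_comm]
  rfl

lemma fst_flux : (flux a w p).1 = 0 := by
  simp only [flux, Prod.fst_sum, Prod.smul_mk, smul_zero, Finset.sum_const_zero]

/-- The subtracted term is the time derivative of a compactly supported function, so it disappears
after integration. -/
lemma energy_density_le (hθ : DifferentiableAt ℝ θ p.1) (hχ : DifferentiableAt ℝ χ p)
    (hw : DifferentiableAt ℝ w p) (hB : (coeffForm a p).IsPosSemidef) (hw0 : 0 ≤ w p)
    (hh : 0 ≤ h p) (hθ0 : 0 ≤ θ p.1) (hθ' : 0 ≤ deriv θ p.1) (hχ01 : χ p ∈ Set.Icc 0 1)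
    (hs0 : 0 < s) (hs1 : s < 1) :
    (pdT w p - h p) * (cutoffPow θ χ (l + 2) p * damping s (w p)) +
        fderiv ℝ (fun p => cutoffPow θ χ (l + 2) p * damping s (w p)) p (flux a w p) -
        pdT (fun p => cutoffPow θ χ (l + 2) p * dampingPrimitive s (w p)) p +
        h p * cutoffPow θ χ (l + 2) p ≤
      θ p.1 * χ p ^ l * ((1 + w p) ^ (1 + s) * cutoffCost a s (l + 2) χ p) := by
  have hζ : DifferentiableAt ℝ (cutoffPow θ χ (l + 2)) p :=
    (hθ.comp p differentiableAt_fst).mul (hχ.pow _)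
  have diffusion := damping_mul_bilinForm_sub_le hB (gradX χ p) (gradX w p) (k := (l + 2 : ℕ))
    (c := χ p) hs0 hw0
  have time := neg_mul_dampingPrimitive_mul_le (τ := pdT χ p) hs0 hs1 hw0 hχ01.1 hχ01.2
  have absorption : 0 ≤ h p * (θ p.1 * χ p ^ (l + 2)) * (damping s (w p) - 1) :=
    mul_nonneg (mul_nonneg hh (mul_nonneg hθ0 (pow_nonneg hχ01.1 _)))
      (sub_nonneg.2 (one_le_damping hw0))
  have start : 0 ≤ dampingPrimitive s (w p) * (deriv θ p.1 * χ p ^ (l + 2)) :=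
    mul_nonneg (dampingPrimitive_nonneg hs1.le hw0) (mul_nonneg hθ' (pow_nonneg hχ01.1 _))
  have cost := mul_le_mul_of_nonneg_left
    (add_le_add (mul_le_mul_of_nonneg_left time (Nat.cast_nonneg (l + 2))) diffusion)
    (mul_nonneg hθ0 (pow_nonneg hχ01.1 l))
  rw [pdT, pdT, fderiv_mul_comp hζ hw (hasDerivAt_damping hw0),
    fderiv_mul_comp hζ hw (hasDerivAt_dampingPrimitive hs1.ne hw0), fderiv_cutoffPow hθ hχ (l + 1)]
  simp only [add_apply, smul_apply, smul_eq_mul, ContinuousLinearMap.coe_fst', fst_flux,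
    fderiv_flux, cutoffPow, cutoffCost]
  simp only [pdT] at cost ⊢
  push_cast at cost ⊢
  linear_combination cost + absorption + start

end EnergyDensity

section EnergyEstimate

/-- The operator `L` with coefficients `a` is degenerate elliptic in divergence form on the
half-space: its quadratic form is symmetric and nonnegative, but possibly zero, at almost every
point. -/
structure IsDegenerateElliptic {n : ℕ} (a : Fin n → Fin n → Pt n → ℝ) : Prop where
  locallyIntegrableOn (i j : Fin n) : LocallyIntegrableOn (a i j) (halfSpace n)
  ae_isPosSemidef : ∀ᵐ p ∂volume.restrict (halfSpace n), (coeffForm a p).IsPosSemidef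

/-- `w ≥ 0` is a weak solution of `w_t - L w ≥ h` on the half-space, where `h ≥ 0`. -/
structure IsNonnegSupersolution {n : ℕ} (a : Fin n → Fin n → Pt n → ℝ) (h w : Pt n → ℝ) :
    Prop where
  contDiffOn : ContDiffOn ℝ 1 w (halfSpace n)
  nonneg : ∀ p ∈ halfSpace n, 0 ≤ w p
  continuousOn_source : ContinuousOn h (halfSpace n)
  source_nonneg : ∀ p ∈ halfSpace n, 0 ≤ h p
  isDistribNonneg : IsDistribNonneg 1 (halfSpace n) (fun p => pdT w p - h p) (flux a w) volume

/-- A nondecreasing `C¹` profile in time with values in `[0, 1]` that vanishes until some positive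
time, so that it localizes to the open half-space. -/
structure IsTimeRamp (θ : ℝ → ℝ) : Prop where
  contDiff : ContDiff ℝ 1 θ
  monotone : Monotone θ
  le_one : ∀ t, θ t ≤ 1
  exists_eq_zero : ∃ ε > 0, ∀ t ≤ ε, θ t = 0

variable {n : ℕ} {a : Fin n → Fin n → Pt n → ℝ} {w χ h : Pt n → ℝ} {θ : ℝ → ℝ} {s : ℝ} {k l : ℕ}

lemma IsTimeRamp.nonneg (hθ : IsTimeRamp θ) (t : ℝ) : 0 ≤ θ t := by
  obtain ⟨ε, -, hε⟩ := hθ.exists_eq_zero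
  exact (hε _ (min_le_right t ε)).symm.trans_le (hθ.monotone (min_le_left t ε))

lemma IsTimeRamp.exists_pos_apply {τ : ℝ} (hτ : 0 < τ) : ∃ θ, IsTimeRamp θ ∧ 0 < θ τ := by
  refine ⟨fun t => smoothTransition (t - τ / 2), ⟨?_, ?_, fun t => smoothTransition.le_one _,
    τ / 2, by positivity, fun t ht => smoothTransition.zero_of_nonpos (sub_nonpos.2 ht)⟩,
    smoothTransition.pos_of_pos (by linarith)⟩
  · exact smoothTransition.contDiff.comp (contDiff_id.sub contDiff_const)
  · exact smoothTransition.monotone.comp fun _ _ h => sub_le_sub_right h _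

lemma contDiff_cutoffPow (hθ : IsTimeRamp θ) (hχ : ContDiff ℝ 1 χ) :
    ContDiff ℝ 1 (cutoffPow θ χ k) :=
  (hθ.contDiff.comp contDiff_fst).mul (hχ.pow k)

lemma hasCompactSupport_cutoffPow (hχs : HasCompactSupport χ) (hk : k ≠ 0) :
    HasCompactSupport (cutoffPow θ χ k) :=
  (hχs.comp_left (g := (· ^ k)) (zero_pow hk)).mul_left

lemma tsupport_cutoffPow_subset (hθ : IsTimeRamp θ) : tsupport (cutoffPow θ χ k) ⊆ halfSpace n := by
  obtain ⟨ε, hε, hθε⟩ := hθ.exists_eq_zero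
  have late : Function.support (cutoffPow θ χ k) ⊆ {p | ε ≤ p.1} := fun p hp => by
    by_contra h
    exact hp (by rw [cutoffPow, hθε _ (not_le.1 h).le, zero_mul])
  exact (closure_minimal late (isClosed_le continuous_const continuous_fst)).trans
    fun p hp => hε.trans_le hp

lemma contDiff_cutoffPow_mul_comp {f : ℝ → ℝ} (hθ : IsTimeRamp θ) (hχ : ContDiff ℝ 1 χ)
    (hw : ContDiffOn ℝ 1 w (halfSpace n)) (hw0 : ∀ p ∈ halfSpace n, 0 ≤ w p)
    (hf : ContDiffOn ℝ 1 f (Set.Ici 0)) :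
    ContDiff ℝ 1 fun p => cutoffPow θ χ k p * f (w p) :=
  contDiff_mul_of_tsupport_subset (contDiff_cutoffPow hθ hχ) (isOpen_halfSpace n)
    (tsupport_cutoffPow_subset hθ) (hf.comp hw hw0)

lemma locallyIntegrableOn_cutoffCost (ha : IsDegenerateElliptic a) (hχ : ContDiff ℝ 1 χ) :
    LocallyIntegrableOn (cutoffCost a s k χ) (halfSpace n) := by
  have hS := isOpen_halfSpace n
  have grad (j) : ContinuousOn (pdX χ j) (halfSpace n) := continuousOn_pdX hχ.contDiffOn j
  have time : ContinuousOn (fun p => 2 * k * |pdT χ p|) (halfSpace n) :=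
    continuousOn_const.mul (continuousOn_pdT hχ.contDiffOn).abs
  refine (time.locallyIntegrableOn hS.measurableSet).add
    (LocallyIntegrableOn.continuousOn_mul ?_ continuousOn_const hS.isLocallyClosed)
  simp only [coeffForm_apply, gradX]
  exact locallyIntegrableOn_finset_sum _ fun i _ => locallyIntegrableOn_finset_sum _ fun j _ =>
    ((ha.locallyIntegrableOn i j).mul_continuousOn (grad i) hS.isLocallyClosed).mul_continuousOn
      (grad j) hS.isLocallyClosed

lemma integrable_cutoffPow_mul {g : Pt n → ℝ} (hθ : IsTimeRamp θ) (hχ : ContDiff ℝ 1 χ)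
    (hχs : HasCompactSupport χ) (hk : k ≠ 0) (hg : LocallyIntegrableOn g (halfSpace n)) :
    Integrable fun p => cutoffPow θ χ k p * g p :=
  integrable_bilin_of_locallyIntegrableOn (ContinuousLinearMap.mul ℝ ℝ)
    (contDiff_cutoffPow hθ hχ).continuous (hasCompactSupport_cutoffPow hχs hk)
    (tsupport_cutoffPow_subset hθ) hg

lemma integrable_cutoffPow_mul_cutoffCost (ha : IsDegenerateElliptic a)
    (hw : ContinuousOn w (halfSpace n)) (hw0 : ∀ p ∈ halfSpace n, 0 ≤ w p)
    (hθ : IsTimeRamp θ) (hχ : ContDiff ℝ 1 χ) (hχs : HasCompactSupport χ) (hl : l ≠ 0) {r : ℝ} :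
    Integrable fun p => cutoffPow θ χ l p * ((1 + w p) ^ r * cutoffCost a s k χ p) := by
  have growth : ContinuousOn (fun p => (1 + w p) ^ r) (halfSpace n) :=
    (continuousOn_const.add hw).rpow_const fun p hp =>
      Or.inl (add_pos_of_pos_of_nonneg one_pos (hw0 p hp)).ne'
  exact integrable_cutoffPow_mul hθ hχ hχs hl
    ((locallyIntegrableOn_cutoffCost ha hχ).continuousOn_mul growth
      (isOpen_halfSpace n).isLocallyClosed)

lemma setIntegral_pdT_eq_zero {F : Pt n → ℝ} (hF : ContDiff ℝ 1 F) (hFs : HasCompactSupport F)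
    (hFS : tsupport F ⊆ halfSpace n) : ∫ p in halfSpace n, pdT F p = 0 := by
  refine (setIntegral_eq_integral_of_forall_compl_eq_zero fun p hp => ?_).trans
    (integral_fderiv_apply_eq_zero hF hFs _)
  rw [pdT, fderiv_of_notMem_tsupport ℝ fun h => hp (hFS h), zero_apply]

lemma IsNonnegSupersolution.setIntegral_le_of_ae_le {φ F f g : Pt n → ℝ}
    (hw : IsNonnegSupersolution a h w) (ha : IsDegenerateElliptic a)
    (hφ : ContDiff ℝ 1 φ) (hφs : HasCompactSupport φ) (hφS : tsupport φ ⊆ halfSpace n)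
    (hφ0 : ∀ p, 0 ≤ φ p) (hF : ContDiff ℝ 1 F) (hFs : HasCompactSupport F)
    (hFS : tsupport F ⊆ halfSpace n) (hf : IntegrableOn f (halfSpace n))
    (hg : IntegrableOn g (halfSpace n))
    (hle : ∀ᵐ p ∂volume.restrict (halfSpace n),
      (pdT w p - h p) * φ p + fderiv ℝ φ p (flux a w p) - pdT F p + f p ≤ g p) :
    ∫ p in halfSpace n, f p ≤ ∫ p in halfSpace n, g p := by
  have test_integrable : IntegrableOn
      (fun p => (pdT w p - h p) * φ p + fderiv ℝ φ p (flux a w p)) (halfSpace n) :=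
    (integrable_mul_add_fderiv
      (((continuousOn_pdT hw.contDiffOn).sub hw.continuousOn_source).locallyIntegrableOn
        (isOpen_halfSpace n).measurableSet)
      (locallyIntegrableOn_flux ha.locallyIntegrableOn hw.contDiffOn) hφ hφs hφS).integrableOn
  have time_integrable : IntegrableOn (pdT F) (halfSpace n) :=
    (((hF.continuous_fderiv one_ne_zero).clm_apply continuous_const).integrable_of_hasCompactSupport
      (hFs.fderiv_apply ℝ _)).integrableOn
  have test := hw.isDistribNonneg φ hφ hφs hφS hφ0
  refine le_trans ?_ (integral_mono_ae ((test_integrable.sub time_integrable).add hf) hg hle)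
  rw [integral_add' (test_integrable.sub time_integrable) hf,
    integral_sub' test_integrable time_integrable, setIntegral_pdT_eq_zero hF hFs hFS, sub_zero]
  exact le_add_of_nonneg_left test

theorem setIntegral_cutoffPow_mul_le (ha : IsDegenerateElliptic a)
    (hw : IsNonnegSupersolution a h w) (hθ : IsTimeRamp θ) (hχ : ContDiff ℝ 1 χ)
    (hχs : HasCompactSupport χ) (hχ01 : ∀ p, χ p ∈ Set.Icc 0 1) (hs0 : 0 < s) (hs1 : s < 1)
    (hl : l ≠ 0) :
    ∫ p in halfSpace n, cutoffPow θ χ (l + 2) p * h p ≤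
      ∫ p in halfSpace n,
        cutoffPow θ χ l p * ((1 + w p) ^ (1 + s) * cutoffCost a s (l + 2) χ p) := by
  have hS := isOpen_halfSpace n
  have hζs : HasCompactSupport (cutoffPow θ χ (l + 2)) := hasCompactSupport_cutoffPow hχs (by omega)
  have hζS : tsupport (cutoffPow θ χ (l + 2)) ⊆ halfSpace n := tsupport_cutoffPow_subset hθ
  have test_nonneg (p) : 0 ≤ cutoffPow θ χ (l + 2) p * damping s (w p) := by
    by_cases hp : p ∈ halfSpace n
    · exact mul_nonneg (mul_nonneg (hθ.nonneg _) (pow_nonneg (hχ01 p).1 _))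
        (zero_le_one.trans (one_le_damping (hw.nonneg p hp)))
    · rw [image_eq_zero_of_notMem_tsupport fun h => hp (hζS h), zero_mul]
  refine hw.setIntegral_le_of_ae_le ha
    (contDiff_cutoffPow_mul_comp (k := l + 2) hθ hχ hw.contDiffOn hw.nonneg
      (contDiffOn_damping (s := s)))
    hζs.mul_right (tsupport_mul_subset_left.trans hζS) test_nonneg
    (contDiff_cutoffPow_mul_comp (k := l + 2) hθ hχ hw.contDiffOn hw.nonneg
      (contDiffOn_dampingPrimitive (s := s)))
    hζs.mul_right (tsupport_mul_subset_left.trans hζS)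
    (integrable_cutoffPow_mul hθ hχ hχs (by omega)
      (hw.continuousOn_source.locallyIntegrableOn hS.measurableSet)).integrableOn
    (integrable_cutoffPow_mul_cutoffCost ha hw.contDiffOn.continuousOn hw.nonneg hθ hχ hχs
      hl).integrableOn ?_
  filter_upwards [ha.ae_isPosSemidef, ae_restrict_mem hS.measurableSet] with p hB hp
  rw [mul_comm _ (h p)]
  exact energy_density_le (hθ.contDiff.differentiable one_ne_zero _)
    (hχ.differentiable one_ne_zero p)
    ((hw.contDiffOn.contDiffAt (hS.mem_nhds hp)).differentiableAt one_ne_zero) hB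
    (hw.nonneg p hp) (hw.source_nonneg p hp) (hθ.nonneg _) hθ.monotone.deriv_nonneg
    (hχ01 p) hs0 hs1

end EnergyEstimate

section Supersolution

lemma IsDistribNonneg.const_smul {E : Type*} [NormedAddCommGroup E] [NormedSpace ℝ E]
    [MeasurableSpace E] {μ : Measure E} {U : Set E} {k : WithTop ℕ∞} {b : E → ℝ} {B : E → E}
    (h : IsDistribNonneg k U b B μ) {c : ℝ} (hc : 0 ≤ c) :
    IsDistribNonneg k U (c • b) (c • B) μ := by
  intro φ hφ hφs hφU hφ0
  simp only [Pi.smul_apply, map_smul, smul_eq_mul, mul_assoc, ← mul_add, integral_const_mul]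
  exact mul_nonneg hc (h φ hφ hφs hφU hφ0)

variable {n : ℕ} {a : Fin n → Fin n → Pt n → ℝ} {u v w h : Pt n → ℝ} {p : Pt n}

lemma pdT_const_smul (c : ℝ) : pdT (c • w) = c • pdT w := by
  ext p
  rw [pdT, fderiv_const_smul_field]
  rfl

lemma flux_const_smul (c : ℝ) : flux a (c • w) = c • flux a w := by
  ext1 p
  simp only [flux, pdX, fderiv_const_smul_field, Pi.smul_apply, smul_apply, smul_eq_mul,
    Finset.smul_sum, smul_smul, mul_assoc]

lemma IsNonnegSupersolution.const_smul (hw : IsNonnegSupersolution a h w) {c : ℝ} (hc : 0 ≤ c) :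
    IsNonnegSupersolution a (c • h) (c • w) where
  contDiffOn := hw.contDiffOn.const_smul c
  nonneg p hp := mul_nonneg hc (hw.nonneg p hp)
  continuousOn_source := hw.continuousOn_source.const_smul c
  source_nonneg p hp := mul_nonneg hc (hw.source_nonneg p hp)
  isDistribNonneg := by
    rw [pdT_const_smul, flux_const_smul]
    simpa only [Pi.smul_def, smul_sub] using hw.isDistribNonneg.const_smul hc

lemma pdT_sub (hu : DifferentiableAt ℝ u p) (hv : DifferentiableAt ℝ v p) :
    pdT (fun p => u p - v p) p = pdT u p - pdT v p := by
  rw [pdT, fderiv_fun_sub hu hv]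
  rfl

lemma flux_sub (hu : DifferentiableAt ℝ u p) (hv : DifferentiableAt ℝ v p) :
    flux a (fun p => u p - v p) p = flux a u p - flux a v p := by
  simp only [flux, pdX, fderiv_fun_sub hu hv, sub_apply, sub_mul, sub_smul,
    Finset.sum_sub_distrib]

lemma WeakSolPair.isDistribNonneg {q : ℝ} (hsol : WeakSolPair a q u v) (hq : 1 ≤ q)
    (ha : ∀ i j, LocallyIntegrableOn (a i j) (halfSpace n))
    (hu : ContDiffOn ℝ 1 u (halfSpace n)) (hv : ContDiffOn ℝ 1 v (halfSpace n)) :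
    IsDistribNonneg (⊤ : ℕ∞) (halfSpace n)
      (fun p => pdT (fun p => u p - v p) p - (oddPow q (u p) - oddPow q (v p)))
      (flux a fun p => u p - v p) volume := by
  intro φ hφ hφs hφS hφ0
  have hS := isOpen_halfSpace n
  have diff {w : Pt n → ℝ} (hw : ContDiffOn ℝ 1 w (halfSpace n)) {p} (hp : p ∈ halfSpace n) :
      DifferentiableAt ℝ w p := (hw.contDiffAt (hS.mem_nhds hp)).differentiableAt one_ne_zero
  have weak_form (w : Pt n → ℝ) (p : Pt n) : pdT w p * φ p +
      ∑ i, ∑ j, a i j p * pdX φ i p * pdX w j p - oddPow q (w p) * φ p =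
      (pdT w p - oddPow q (w p)) * φ p + fderiv ℝ φ p (flux a w p) := by
    rw [fderiv_flux, coeffForm_apply]
    simp only [gradX]
    ring
  have integrable {w : Pt n → ℝ} (hw : ContDiffOn ℝ 1 w (halfSpace n)) : IntegrableOn
      (fun p => (pdT w p - oddPow q (w p)) * φ p + fderiv ℝ φ p (flux a w p)) (halfSpace n) :=
    (integrable_mul_add_fderiv
      (((continuousOn_pdT hw).sub
        ((continuous_oddPow hq).comp_continuousOn hw.continuousOn)).locallyIntegrableOn
          hS.measurableSet)
      (locallyIntegrableOn_flux ha hw) (hφ.of_le (by exact_mod_cast le_top)) hφs hφS).integrableOn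
  have compare := hsol φ hφ hφs hφS hφ0
  simp only [weak_form] at compare
  rw [ge_iff_le, ← sub_nonneg, ← integral_sub (integrable hu) (integrable hv)] at compare
  refine compare.trans_eq (setIntegral_congr_fun hS.measurableSet fun p hp => ?_)
  simp only [pdT_sub (diff hu hp) (diff hv hp), flux_sub (diff hu hp) (diff hv hp), map_sub]
  ring

theorem WeakSolPair.isNonnegSupersolution_sub {q : ℝ} (hsol : WeakSolPair a q u v) (hq : 1 ≤ q)
    (ha : ∀ i j, LocallyIntegrableOn (a i j) (halfSpace n))
    (hu : ContDiffOn ℝ 1 u (halfSpace n)) (hv : ContDiffOn ℝ 1 v (halfSpace n))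
    (huv : ∀ p ∈ halfSpace n, v p ≤ u p) :
    IsNonnegSupersolution a (fun p => oddPow q (u p) - oddPow q (v p))
      (fun p => u p - v p) := by
  have hS := isOpen_halfSpace n
  have hw : ContDiffOn ℝ 1 (fun p => u p - v p) (halfSpace n) := hu.sub hv
  have source : ContinuousOn (fun p => oddPow q (u p) - oddPow q (v p)) (halfSpace n) :=
    ((continuous_oddPow hq).comp_continuousOn hu.continuousOn).sub
      ((continuous_oddPow hq).comp_continuousOn hv.continuousOn)
  refine ⟨hw, fun p hp => sub_nonneg.2 (huv p hp), source, fun p hp => ?_, ?_⟩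
  · refine le_trans ?_ (two_rpow_mul_sub_rpow_le_oddPow_sub hq (huv p hp))
    have := sub_nonneg.2 (huv p hp)
    positivity
  · exact (hsol.isDistribNonneg hq ha hu hv).of_smooth hS
      (((continuousOn_pdT hw).sub source).locallyIntegrableOn hS.measurableSet)
      (locallyIntegrableOn_flux ha hw)

end Supersolution

section BoxCutoff

variable {n : ℕ} {T R : ℝ} {p : Pt n}

/-- The reference cutoff in time, equal to `1` on `[-1, 1]` and supported in `[-2, 2]`. -/
def timeBump : ContDiffBump (0 : ℝ) := ⟨1, 2, one_pos, one_lt_two⟩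

/-- The reference cutoff in space, equal to `1` for `|x| ≤ 1/2` and supported in `|x| ≤ 1`. -/
def spaceBump (n : ℕ) : ContDiffBump (0 : Xn n) := ⟨1 / 2, 1, one_half_pos, one_half_lt_one⟩

/-- The cutoff at time scale `T` and length scale `R`. -/
def boxCutoff (T R : ℝ) (p : Pt n) : ℝ := timeBump (T⁻¹ * p.1) * spaceBump n (R⁻¹ • p.2)

/-- The part of space-time where `boxCutoff T R` is not guaranteed to equal `1`. -/
def outerRegion (n : ℕ) (T R : ℝ) : Set (Pt n) := {p | T < p.1 ∨ R / 2 < ‖p.2‖}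

lemma contDiff_boxCutoff : ContDiff ℝ 1 (boxCutoff T R : Pt n → ℝ) :=
  (timeBump.contDiff.comp (contDiff_const.mul contDiff_fst)).mul
    ((spaceBump n).contDiff.comp (contDiff_snd.const_smul R⁻¹))

lemma boxCutoff_mem_Icc : boxCutoff T R p ∈ Set.Icc 0 1 :=
  ⟨mul_nonneg timeBump.nonneg (spaceBump n).nonneg,
    mul_le_one₀ timeBump.le_one (spaceBump n).nonneg (spaceBump n).le_one⟩

lemma spaceBump_eq_one (hR : 0 < R) (hp : ‖p.2‖ ≤ R / 2) : spaceBump n (R⁻¹ • p.2) = 1 := by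
  refine (spaceBump n).one_of_mem_closedBall (mem_closedBall_zero_iff.2 ?_)
  rw [norm_smul, norm_inv, norm_of_nonneg hR.le, inv_mul_le_iff₀ hR]
  exact hp.trans_eq (div_eq_mul_one_div R 2)

lemma spaceBump_eq_zero (hR : 0 < R) (hp : R ≤ ‖p.2‖) : spaceBump n (R⁻¹ • p.2) = 0 := by
  refine (spaceBump n).zero_of_le_dist ?_
  rw [dist_zero_right, norm_smul, norm_inv, norm_of_nonneg hR.le, le_inv_mul_iff₀ hR]
  exact (mul_one R).trans_le hp

lemma boxCutoff_eq_one (hT : 0 < T) (hR : 0 < R) (hp : p ∈ halfSpace n)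
    (hp' : p ∉ outerRegion n T R) : boxCutoff T R p = 1 := by
  obtain ⟨ht, hx⟩ := not_or.1 hp'
  have time : timeBump (T⁻¹ * p.1) = 1 := by
    refine timeBump.one_of_mem_closedBall (mem_closedBall_zero_iff.2 ?_)
    rw [norm_of_nonneg (mul_nonneg (inv_nonneg.2 hT.le) hp.le), inv_mul_le_iff₀ hT]
    exact (not_lt.1 ht).trans_eq (mul_one T).symm
  rw [boxCutoff, time, spaceBump_eq_one hR (not_lt.1 hx), one_mul]

lemma support_boxCutoff_subset (hT : 0 < T) (hR : 0 < R) :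
    Function.support (boxCutoff T R : Pt n → ℝ) ⊆
      Set.Icc (-(2 * T)) (2 * T) ×ˢ Metric.closedBall 0 R := by
  intro p hp
  have time := timeBump.support_eq.le (left_ne_zero_of_mul hp)
  have space : p.2 ∈ Metric.closedBall 0 R :=
    mem_closedBall_zero_iff.2 <| le_of_not_ge fun h =>
      right_ne_zero_of_mul hp (spaceBump_eq_zero hR h)
  rw [mem_ball_zero_iff, norm_mul, norm_inv, norm_of_nonneg hT.le, inv_mul_lt_iff₀ hT] at time
  exact ⟨abs_le.1 (time.le.trans_eq (mul_comm T 2)), space⟩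

lemma hasCompactSupport_boxCutoff (hT : 0 < T) (hR : 0 < R) :
    HasCompactSupport (boxCutoff T R : Pt n → ℝ) :=
  .of_support_subset_isCompact (isCompact_Icc.prod (isCompact_closedBall 0 R))
    (support_boxCutoff_subset hT hR)

lemma hasFDerivAt_boxCutoff : HasFDerivAt (boxCutoff T R : Pt n → ℝ)
    (timeBump (T⁻¹ * p.1) • (fderiv ℝ (spaceBump n) (R⁻¹ • p.2)).comp
        (R⁻¹ • ContinuousLinearMap.snd ℝ ℝ (Xn n)) +
      spaceBump n (R⁻¹ • p.2) • (fderiv ℝ timeBump (T⁻¹ * p.1)).comp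
        (T⁻¹ • ContinuousLinearMap.fst ℝ ℝ (Xn n))) p := by
  have time := timeBump.contDiff.differentiable (n := 1) one_ne_zero (T⁻¹ * p.1)
  have space := (spaceBump n).contDiff.differentiable (n := 1) one_ne_zero (R⁻¹ • p.2)
  have time_scaled := time.hasFDerivAt.comp p (hasFDerivAt_fst.const_mul T⁻¹)
  have space_scaled := space.hasFDerivAt.comp p (hasFDerivAt_snd.const_smul R⁻¹)
  exact time_scaled.mul space_scaled

lemma pdT_boxCutoff : pdT (boxCutoff T R) p =
    spaceBump n (R⁻¹ • p.2) * (T⁻¹ * deriv timeBump (T⁻¹ * p.1)) := by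
  rw [pdT, hasFDerivAt_boxCutoff.fderiv]
  simp

lemma fderiv_boxCutoff_zero_prod (ξ : Xn n) : fderiv ℝ (boxCutoff T R) p (0, ξ) =
    timeBump (T⁻¹ * p.1) * (R⁻¹ * fderiv ℝ (spaceBump n) (R⁻¹ • p.2) ξ) := by
  rw [hasFDerivAt_boxCutoff.fderiv]
  simp

lemma gradX_boxCutoff_eq_zero (hR : 0 < R) (hp : ‖p.2‖ ∉ Set.Ioo (R / 2) R) :
    gradX (boxCutoff T R) p = 0 := by
  have extremal : IsLocalExtr (spaceBump n) (R⁻¹ • p.2) := by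
    by_cases h : R / 2 < ‖p.2‖
    · refine Or.inl (Filter.Eventually.of_forall fun _ => ?_)
      rw [spaceBump_eq_zero hR (not_lt.1 fun h' => hp ⟨h, h'⟩)]
      exact (spaceBump n).nonneg
    · refine Or.inr (Filter.Eventually.of_forall fun _ => ?_)
      rw [spaceBump_eq_one hR (not_lt.1 h)]
      exact (spaceBump n).le_one
  ext j
  simp [gradX, pdX, fderiv_boxCutoff_zero_prod, extremal.fderiv_eq_zero]

lemma fderiv_boxCutoff_eq_zero (hT : 0 < T) (hR : 0 < R) (hp : p ∈ halfSpace n)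
    (hp' : p ∉ outerRegion n T R) : fderiv ℝ (boxCutoff T R) p = 0 :=
  IsLocalMax.fderiv_eq_zero <| Filter.Eventually.of_forall fun _ =>
    boxCutoff_mem_Icc.2.trans_eq (boxCutoff_eq_one hT hR hp hp').symm

lemma exists_boxCutoff_derivative_bound (n : ℕ) : ∃ C : ℝ, 0 ≤ C ∧ ∀ T > 0, ∀ R > 0, ∀ p : Pt n,
    |pdT (boxCutoff T R) p| ≤ C * T⁻¹ ∧ ‖WithLp.toLp 2 (gradX (boxCutoff T R) p)‖ ≤ C * R⁻¹ := by
  obtain ⟨C₁, hC₁⟩ := (timeBump.hasCompactSupport.deriv).exists_bound_of_continuous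
    (timeBump.contDiff.continuous_deriv le_rfl)
  obtain ⟨C₂, hC₂⟩ := ((spaceBump n).hasCompactSupport.fderiv ℝ).exists_bound_of_continuous
    ((spaceBump n).contDiff.continuous_fderiv one_ne_zero)
  have hC₁0 : 0 ≤ C₁ := (norm_nonneg _).trans (hC₁ 0)
  have hC₂0 : 0 ≤ C₂ := (norm_nonneg _).trans (hC₂ 0)
  refine ⟨C₁ + C₂, by positivity, fun T hT R hR p =>
    ⟨?_, norm_gradX_le (by positivity) fun ξ => ?_⟩⟩
  · rw [pdT_boxCutoff, abs_mul, abs_of_nonneg (spaceBump n).nonneg, abs_mul,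
      abs_of_pos (inv_pos.2 hT), mul_comm (T⁻¹)]
    refine (mul_le_of_le_one_left (by positivity) (spaceBump n).le_one).trans ?_
    gcongr
    exact (hC₁ _).trans (by linarith)
  · rw [fderiv_boxCutoff_zero_prod, abs_mul, abs_of_nonneg timeBump.nonneg, abs_mul,
      abs_of_pos (inv_pos.2 hR), mul_comm (C₁ + C₂), mul_assoc]
    refine (mul_le_of_le_one_left (by positivity) timeBump.le_one).trans ?_
    gcongr
    exact (ContinuousLinearMap.le_of_opNorm_le _ (hC₂ _) ξ).trans (by gcongr; linarith)

variable {a : Fin n → Fin n → Pt n → ℝ} {α c s : ℝ}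

/-- Condition (8) for the coefficients themselves, without reference to a majorant. -/
def HasGrowthBound (a : Fin n → Fin n → Pt n → ℝ) (α c : ℝ) : Prop :=
  ∀ R, 1 < R → ∀ᵐ p ∂volume.restrict (halfSpace n), ‖p.2‖ ∈ Set.Ioo (R / 2) R →
    ∀ ξ : Fin n → ℝ, coeffForm a p ξ ξ ≤ c * R ^ (2 - α) * ‖WithLp.toLp 2 ξ‖ ^ 2

lemma HasGrowthBound.ae_coeffForm_boxCutoff_le (ha : HasGrowthBound a α c) (hc : 0 ≤ c) {C : ℝ}
    (hR : 1 < R) (hC : ∀ p : Pt n, ‖WithLp.toLp 2 (gradX (boxCutoff T R) p)‖ ≤ C * R⁻¹) :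
    ∀ᵐ p ∂volume.restrict (halfSpace n),
      coeffForm a p (gradX (boxCutoff T R) p) (gradX (boxCutoff T R) p) ≤
        c * C ^ 2 * R ^ (-α) := by
  have hR0 : 0 < R := one_pos.trans hR
  filter_upwards [ha R hR] with p hp
  by_cases hshell : ‖p.2‖ ∈ Set.Ioo (R / 2) R
  · calc coeffForm a p (gradX (boxCutoff T R) p) (gradX (boxCutoff T R) p)
        ≤ c * R ^ (2 - α) * (C * R⁻¹) ^ 2 :=
          (hp hshell _).trans (by gcongr; exact hC p)
      _ = c * C ^ 2 * R ^ (-α) := by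
          rw [sub_eq_add_neg, Real.rpow_add hR0, Real.rpow_two]
          field_simp
  · rw [gradX_boxCutoff_eq_zero hR0 hshell, map_zero]
    exact mul_nonneg (by positivity) (rpow_nonneg hR0.le _)

lemma HasGrowthBound.exists_cutoffCost_le (ha : HasGrowthBound a α c) (hc : 0 ≤ c) (hs : 0 ≤ s)
    (k : ℕ) : ∃ K, 0 ≤ K ∧ ∀ R, 1 < R → ∀ᵐ p ∂volume.restrict (halfSpace n),
      cutoffCost a s k (boxCutoff (R ^ α) R) p ≤
        (outerRegion n (R ^ α) R).indicator (fun _ => K * R ^ (-α)) p := by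
  obtain ⟨C, hC0, hC⟩ := exists_boxCutoff_derivative_bound n
  refine ⟨2 * k * C + k ^ 2 / s * (c * C ^ 2), by positivity, fun R hR => ?_⟩
  have hR0 : 0 < R := one_pos.trans hR
  have hT : 0 < R ^ α := rpow_pos_of_pos hR0 α
  have bound := hC (R ^ α) hT R hR0
  filter_upwards [ha.ae_coeffForm_boxCutoff_le hc hR fun p => (bound p).2,
    ae_restrict_mem (isOpen_halfSpace n).measurableSet] with p hp hpS
  by_cases houter : p ∈ outerRegion n (R ^ α) R
  · rw [Set.indicator_of_mem houter, cutoffCost, add_mul, mul_assoc _ C, mul_assoc _ (c * _),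
      Real.rpow_neg hR0.le]
    gcongr
    · exact (bound p).1
    · exact hp.trans_eq (by rw [Real.rpow_neg hR0.le])
  · have flat : gradX (boxCutoff (R ^ α) R) p = 0 := by
      ext j
      rw [gradX, pdX, fderiv_boxCutoff_eq_zero hT hR0 hpS houter]
      rfl
    rw [Set.indicator_of_notMem houter, cutoffCost, pdT,
      fderiv_boxCutoff_eq_zero hT hR0 hpS houter, flat]
    simp

end BoxCutoff

section AprioriEstimate

variable {n l : ℕ} {a : Fin n → Fin n → Pt n → ℝ} {w h : Pt n → ℝ} {θ : ℝ → ℝ}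
  {α c q s e T R : ℝ}

lemma volume_real_box (hT : 0 ≤ T) (hR : 0 ≤ R) :
    volume.real (Set.Icc (-(2 * T)) (2 * T) ×ˢ Metric.closedBall (0 : Xn n) R) =
      4 * volume.real (Metric.ball (0 : Xn n) 1) * (T * R ^ n) := by
  have interval : volume.real (Set.Icc (-(2 * T)) (2 * T)) = 4 * T := by
    rw [Real.volume_real_Icc_of_le (by linarith)]
    ring
  rw [Measure.volume_eq_prod, measureReal_prod_prod, interval,
    Measure.addHaar_real_closedBall _ _ hR, finrank_euclideanSpace_fin]
  ring

lemma measurableSet_outerRegion : MeasurableSet (outerRegion n T R) :=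
  ((isOpen_lt continuous_const continuous_fst).union
    (isOpen_lt continuous_const continuous_snd.norm)).measurableSet

lemma integrable_cutoffPow_boxCutoff_mul {g : Pt n → ℝ} {k : ℕ} (hθ : IsTimeRamp θ) (hT : 0 < T)
    (hR : 0 < R) (hk : k ≠ 0) (hg : ContinuousOn g (halfSpace n)) :
    Integrable (fun p => cutoffPow θ (boxCutoff T R) k p * g p)
      (volume.restrict (halfSpace n)) :=
  (integrable_cutoffPow_mul hθ contDiff_boxCutoff (hasCompactSupport_boxCutoff hT hR) hk
    (hg.locallyIntegrableOn (isOpen_halfSpace n).measurableSet)).integrableOn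

lemma cutoffPow_boxCutoff_mul_le {r κ C : ℝ} {b : Pt n → ℝ} {p : Pt n} (hθ : IsTimeRamp θ)
    (hT : 0 < T) (hR : 0 < R) (hl : l ≠ 0) (he : 0 ≤ e) (hκ : 0 ≤ κ) (hC : 0 ≤ C)
    (hwp : 0 ≤ w p) (hb : b p ≤ (outerRegion n T R).indicator (fun _ => κ) p)
    (young : ∀ y, 0 ≤ y → ∀ x ∈ Set.Icc (0 : ℝ) 1,
      (1 + y) ^ r * x ^ l ≤ e * (y ^ q * x ^ (l + 2)) + C) :
    cutoffPow θ (boxCutoff T R) l p * ((1 + w p) ^ r * b p) ≤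
      κ * (e * (outerRegion n T R).indicator
          (fun p => cutoffPow θ (boxCutoff T R) (l + 2) p * w p ^ q) p +
        (Set.Icc (-(2 * T)) (2 * T) ×ˢ Metric.closedBall 0 R).indicator (fun _ => C) p) := by
  have hθ0 := hθ.nonneg p.1
  have hχ := boxCutoff_mem_Icc (T := T) (R := R) (p := p)
  have growth : 0 ≤ (1 + w p) ^ r := by positivity
  have ζ_nonneg (k) : 0 ≤ cutoffPow θ (boxCutoff T R) k p := mul_nonneg hθ0 (pow_nonneg hχ.1 _)
  have rhs_nonneg : 0 ≤ (outerRegion n T R).indicator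
      (fun p => cutoffPow θ (boxCutoff T R) (l + 2) p * w p ^ q) p :=
    Set.indicator_apply_nonneg fun _ => mul_nonneg (ζ_nonneg _) (rpow_nonneg hwp q)
  have box_nonneg : 0 ≤ (Set.Icc (-(2 * T)) (2 * T) ×ˢ Metric.closedBall (0 : Xn n) R).indicator
      (fun _ => C) p := Set.indicator_apply_nonneg fun _ => hC
  by_cases hχp : boxCutoff T R p = 0
  · rw [cutoffPow, hχp, zero_pow hl, mul_zero, zero_mul]
    positivity
  by_cases houter : p ∈ outerRegion n T R
  · rw [Set.indicator_of_mem houter] at hb ⊢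
    rw [Set.indicator_of_mem (support_boxCutoff_subset hT hR hχp)]
    calc cutoffPow θ (boxCutoff T R) l p * ((1 + w p) ^ r * b p)
        ≤ cutoffPow θ (boxCutoff T R) l p * ((1 + w p) ^ r * κ) := by gcongr; exact ζ_nonneg l
      _ = κ * (θ p.1 * ((1 + w p) ^ r * boxCutoff T R p ^ l)) := by rw [cutoffPow]; ring
      _ ≤ κ * (θ p.1 * (e * (w p ^ q * boxCutoff T R p ^ (l + 2)) + C)) := by
          gcongr
          exact young _ hwp _ hχ
      _ = κ * (e * (cutoffPow θ (boxCutoff T R) (l + 2) p * w p ^ q) + θ p.1 * C) := by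
          rw [cutoffPow]
          ring
      _ ≤ κ * (e * (cutoffPow θ (boxCutoff T R) (l + 2) p * w p ^ q) + C) := by
          gcongr
          exact mul_le_of_le_one_left hC (hθ.le_one _)
  · rw [Set.indicator_of_notMem houter] at hb
    exact (mul_nonpos_of_nonneg_of_nonpos (ζ_nonneg l)
      (mul_nonpos_of_nonneg_of_nonpos growth hb)).trans (by positivity)

theorem setIntegral_cutoffPow_boxCutoff_mul_le {κ C : ℝ} (ha : IsDegenerateElliptic a)
    (hw : IsNonnegSupersolution a h w) (hθ : IsTimeRamp θ) (hT : 0 < T) (hR : 0 < R)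
    (hs0 : 0 < s) (hs1 : s < 1) (hl : l ≠ 0) (hq : 0 ≤ q) (he : 0 ≤ e) (hκ : 0 ≤ κ) (hC : 0 ≤ C)
    (hcost : ∀ᵐ p ∂volume.restrict (halfSpace n), cutoffCost a s (l + 2) (boxCutoff T R) p ≤
      (outerRegion n T R).indicator (fun _ => κ) p)
    (young : ∀ y, 0 ≤ y → ∀ x ∈ Set.Icc (0 : ℝ) 1,
      (1 + y) ^ (1 + s) * x ^ l ≤ e * (y ^ q * x ^ (l + 2)) + C) :
    ∫ p in halfSpace n, cutoffPow θ (boxCutoff T R) (l + 2) p * h p ≤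
      κ * (e * (∫ p in outerRegion n T R, cutoffPow θ (boxCutoff T R) (l + 2) p * w p ^ q
          ∂volume.restrict (halfSpace n)) +
        4 * volume.real (Metric.ball (0 : Xn n) 1) * (T * R ^ n) * C) := by
  let box := Set.Icc (-(2 * T)) (2 * T) ×ˢ Metric.closedBall (0 : Xn n) R
  have compact_box : IsCompact box := isCompact_Icc.prod (isCompact_closedBall 0 R)
  have left_integrable : IntegrableOn (fun p => cutoffPow θ (boxCutoff T R) l p *
      ((1 + w p) ^ (1 + s) * cutoffCost a s (l + 2) (boxCutoff T R) p)) (halfSpace n) :=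
    (integrable_cutoffPow_mul_cutoffCost ha hw.contDiffOn.continuousOn hw.nonneg hθ
      contDiff_boxCutoff (hasCompactSupport_boxCutoff hT hR) hl).integrableOn
  have outer_integrable := (integrable_cutoffPow_boxCutoff_mul (k := l + 2) hθ hT hR (by omega)
    (hw.contDiffOn.continuousOn.rpow_const fun _ _ => Or.inr hq)).indicator
      (measurableSet_outerRegion (T := T) (R := R))
  have box_integrable : Integrable (box.indicator fun _ => C) (volume.restrict (halfSpace n)) :=
    ((integrable_indicator_iff compact_box.measurableSet).2
      (integrableOn_const compact_box.measure_lt_top.ne)).restrict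
  have box_integral : ∫ p in halfSpace n, box.indicator (fun _ => C) p ≤
      4 * volume.real (Metric.ball (0 : Xn n) 1) * (T * R ^ n) * C := by
    rw [integral_indicator_const _ compact_box.measurableSet, ← volume_real_box hT.le hR.le]
    exact mul_le_mul_of_nonneg_right (ENNReal.toReal_mono compact_box.measure_lt_top.ne
      (Measure.restrict_apply_le _ _)) hC
  refine (setIntegral_cutoffPow_mul_le ha hw hθ contDiff_boxCutoff
    (hasCompactSupport_boxCutoff hT hR) (fun _ => boxCutoff_mem_Icc) hs0 hs1 hl).trans ?_
  refine (integral_mono_ae left_integrable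
    (((outer_integrable.const_mul e).add box_integrable).const_mul κ) ?_).trans ?_
  · filter_upwards [hcost, ae_restrict_mem (isOpen_halfSpace n).measurableSet] with p hp hpS
    exact cutoffPow_boxCutoff_mul_le hθ hT hR hl he hκ hC (hw.nonneg p hpS) hp young
  · rw [integral_const_mul, integral_add' (outer_integrable.const_mul e) box_integrable,
      integral_const_mul, integral_indicator measurableSet_outerRegion]
    gcongr

theorem exists_apriori_bound (ha : IsDegenerateElliptic a) (hgrowth : HasGrowthBound a α c)
    (hc : 0 ≤ c) (hq : 1 < q) (he : 0 < e) :
    ∃ k ≠ 0, ∃ C, 0 ≤ C ∧ ∀ h w θ, IsNonnegSupersolution a h w → IsTimeRamp θ → ∀ R, 1 < R →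
      ∫ p in halfSpace n, cutoffPow θ (boxCutoff (R ^ α) R) k p * h p ≤
        R ^ (-α) * (e * ∫ p in outerRegion n (R ^ α) R,
          cutoffPow θ (boxCutoff (R ^ α) R) k p * w p ^ q ∂volume.restrict (halfSpace n)) +
        C * R ^ n := by
  obtain ⟨s, hs0, hs⟩ := exists_between (lt_min one_pos (sub_pos.2 hq))
  obtain ⟨hs1, hsq⟩ := lt_min_iff.1 hs
  obtain ⟨l, hl⟩ := exists_nat_ge (2 * (1 + s) / (q - (1 + s)))
  rw [div_le_iff₀ (by linarith)] at hl
  have hl0 : l ≠ 0 := by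
    rintro rfl
    rw [Nat.cast_zero, zero_mul] at hl
    linarith
  obtain ⟨K, hK0, hK⟩ := hgrowth.exists_cutoffCost_le hc hs0.le (l + 2)
  obtain ⟨C, hC0, young⟩ := exists_one_add_rpow_mul_pow_le (l := l) (by linarith)
    (lt_sub_iff_add_lt'.1 hsq) hq.le (div_pos he (by positivity : 0 < K + 1)) (by linarith)
  refine ⟨l + 2, by omega, (K + 1) * (4 * volume.real (Metric.ball (0 : Xn n) 1) * C),
    by positivity, fun h w θ hw hθ R hR => ?_⟩
  have hR0 : 0 < R := one_pos.trans hR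
  have cost : ∀ᵐ p ∂volume.restrict (halfSpace n), cutoffCost a s (l + 2) (boxCutoff (R ^ α) R) p ≤
      (outerRegion n (R ^ α) R).indicator (fun _ => (K + 1) * R ^ (-α)) p := by
    filter_upwards [hK R hR] with p hp
    exact hp.trans (Set.indicator_le_indicator (by gcongr; linarith))
  refine (setIntegral_cutoffPow_boxCutoff_mul_le ha hw hθ (rpow_pos_of_pos hR0 α) hR0 hs0 hs1 hl0
    (by linarith) (by positivity) (by positivity) hC0 cost young).trans_eq ?_
  rw [Real.rpow_neg hR0.le]
  field_simp

lemma exists_critical_scale {δ : ℝ} (hR : 1 < R) (hδ : 0 < δ) (hq : 1 < q)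
    (hqα : n * (q - 1) ≤ α) :
    ∃ m > 0, R ^ (-α) * m ^ (1 - q) = δ ^ (1 - q) ∧ m * R ^ n ≤ δ := by
  have hR0 : 0 < R := one_pos.trans hR
  have hq1 : 0 < q - 1 := sub_pos.2 hq
  refine ⟨δ * R ^ (-(α / (q - 1))), by positivity, ?_, ?_⟩
  · rw [Real.mul_rpow hδ.le (by positivity), ← Real.rpow_mul hR0.le, mul_left_comm,
      ← Real.rpow_add hR0]
    have exponent : -α + -(α / (q - 1)) * (1 - q) = 0 := by
      field_simp
      ring
    rw [exponent, Real.rpow_zero, mul_one]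
  · rw [mul_assoc, ← Real.rpow_natCast, ← Real.rpow_add hR0]
    refine mul_le_of_le_one_right hδ.le (Real.rpow_le_one_of_one_le_of_nonpos hR.le ?_)
    rw [neg_add_nonpos_iff, le_div_iff₀ hq1]
    exact hqα

theorem exists_scaled_apriori_bound (ha : IsDegenerateElliptic a) (hgrowth : HasGrowthBound a α c)
    (hc : 0 ≤ c) (hq : 1 < q) (hqα : n * (q - 1) ≤ α) (he : 0 < e) :
    ∃ k ≠ 0, ∃ M, ∀ h w θ, IsNonnegSupersolution a h w → IsTimeRamp θ →
      ∀ R, 1 < R → ∀ δ, 0 < δ →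
      ∫ p in halfSpace n, cutoffPow θ (boxCutoff (R ^ α) R) k p * h p ≤
        δ ^ (1 - q) * (e * ∫ p in outerRegion n (R ^ α) R,
          cutoffPow θ (boxCutoff (R ^ α) R) k p * w p ^ q ∂volume.restrict (halfSpace n)) +
        M * δ := by
  obtain ⟨k, hk, M, hM, bound⟩ := exists_apriori_bound ha hgrowth hc hq he
  refine ⟨k, hk, M, fun h w θ hw hθ R hR δ hδ => ?_⟩
  obtain ⟨m, hm0, nonlinear_weight, volume_weight⟩ := exists_critical_scale hR hδ hq hqα
  have scaled := bound _ _ θ (hw.const_smul (inv_nonneg.2 hm0.le)) hθ R hR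
  set ζ := cutoffPow θ (boxCutoff (n := n) (R ^ α) R) k
  have source_integral : ∫ p in halfSpace n, ζ p * (m⁻¹ • h) p =
      m⁻¹ * ∫ p in halfSpace n, ζ p * h p := by
    rw [← integral_const_mul]
    exact integral_congr_ae (Filter.Eventually.of_forall fun p => mul_left_comm _ _ _)
  have power_integral : ∫ p in outerRegion n (R ^ α) R, ζ p * (m⁻¹ • w) p ^ q
      ∂volume.restrict (halfSpace n) = m ^ (-q) * ∫ p in outerRegion n (R ^ α) R, ζ p * w p ^ q
      ∂volume.restrict (halfSpace n) := by
    rw [← integral_const_mul]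
    refine integral_congr_ae (ae_restrict_of_ae ?_)
    filter_upwards [ae_restrict_mem (isOpen_halfSpace n).measurableSet] with p hp
    rw [Pi.smul_apply, smul_eq_mul, Real.mul_rpow (inv_nonneg.2 hm0.le) (hw.nonneg p hp),
      Real.inv_rpow hm0.le, Real.rpow_neg hm0.le, mul_left_comm]
  rw [source_integral, power_integral, inv_mul_le_iff₀ hm0] at scaled
  refine scaled.trans ?_
  rw [← nonlinear_weight, sub_eq_add_neg, Real.rpow_add hm0, Real.rpow_one]
  linarith [mul_le_mul_of_nonneg_left volume_weight hM]

end AprioriEstimate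

section Exhaustion

variable {X ι : Type*} [MeasurableSpace X] {μ : Measure X} {𝓕 : Filter ι} [𝓕.NeBot]
  [𝓕.IsCountablyGenerated] {B : ι → Set X} {f : X → ℝ} {F : ι → X → ℝ} {M : ℝ}

lemma integrable_of_integral_le_tail {c : ℝ} (hB : AECover μ 𝓕 B)
    (hF : ∀ i, Integrable (F i) μ) (hF0 : ∀ i, 0 ≤ᵐ[μ] F i) (hFf : ∀ i, F i ≤ᵐ[μ] f)
    (hFB : ∀ i, F i =ᵐ[μ.restrict (B i)] f) (hc0 : 0 ≤ c) (hc1 : c < 1)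
    (htail : ∀ i, ∫ x, F i x ∂μ ≤ c * (∫ x in (B i)ᶜ, F i x ∂μ) + M) : Integrable f μ := by
  obtain ⟨i₀, -⟩ := 𝓕.nonempty_of_mem Filter.univ_mem
  refine hB.integrable_of_integral_bounded_of_nonneg_ae (M / (1 - c))
    (fun i => (hF i).integrableOn.congr_fun_ae (hFB i)) ((hF0 i₀).trans (hFf i₀))
    (Filter.Eventually.of_forall fun i => ?_)
  have absorbed : ∫ x, F i x ∂μ ≤ M / (1 - c) := by
    rw [le_div_iff₀ (sub_pos.2 hc1)]
    have := mul_le_mul_of_nonneg_left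
      (setIntegral_le_integral (s := (B i)ᶜ) (hF i) (hF0 i)) hc0
    linarith [htail i]
  calc ∫ x in B i, f x ∂μ = ∫ x in B i, F i x ∂μ := integral_congr_ae (hFB i).symm
    _ ≤ ∫ x, F i x ∂μ := setIntegral_le_integral (hF i) (hF0 i)
    _ ≤ M / (1 - c) := absorbed

theorem ae_eq_zero_of_integral_le_tail {c : ℝ → ℝ} (hB : AECover μ 𝓕 B)
    (hF : ∀ i, Integrable (F i) μ) (hF0 : ∀ i, 0 ≤ᵐ[μ] F i) (hFf : ∀ i, F i ≤ᵐ[μ] f)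
    (hFB : ∀ i, F i =ᵐ[μ.restrict (B i)] f) (hc0 : ∀ δ > 0, 0 ≤ c δ) (hc1 : c 1 < 1)
    (htail : ∀ i, ∀ δ > 0, ∫ x, F i x ∂μ ≤ c δ * (∫ x in (B i)ᶜ, F i x ∂μ) + M * δ) :
    f =ᵐ[μ] 0 := by
  have hf : Integrable f μ := integrable_of_integral_le_tail hB hF hF0 hFf hFB (hc0 1 one_pos) hc1
    fun i => htail i 1 one_pos
  obtain ⟨i₀, -⟩ := 𝓕.nonempty_of_mem Filter.univ_mem
  have hf0 : 0 ≤ᵐ[μ] f := (hF0 i₀).trans (hFf i₀)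
  have inner_le (δ : ℝ) (hδ : 0 < δ) (i : ι) :
      ∫ x in B i, f x ∂μ ≤ c δ * (∫ x, f x ∂μ - ∫ x in B i, f x ∂μ) + M * δ :=
    calc ∫ x in B i, f x ∂μ = ∫ x in B i, F i x ∂μ := integral_congr_ae (hFB i).symm
      _ ≤ ∫ x, F i x ∂μ := setIntegral_le_integral (hF i) (hF0 i)
      _ ≤ c δ * (∫ x in (B i)ᶜ, F i x ∂μ) + M * δ := htail i δ hδ
      _ ≤ c δ * (∫ x in (B i)ᶜ, f x ∂μ) + M * δ := by
          have := setIntegral_mono_ae (s := (B i)ᶜ) (hF i).integrableOn hf.integrableOn (hFf i)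
          linarith [mul_le_mul_of_nonneg_left this (hc0 δ hδ)]
      _ = c δ * (∫ x, f x ∂μ - ∫ x in B i, f x ∂μ) + M * δ := by
          rw [← integral_add_compl (hB.measurableSet i) hf, add_sub_cancel_left]
  have inner_tendsto := hB.integral_tendsto_of_countably_generated hf
  have integral_le (δ : ℝ) (hδ : 0 < δ) : ∫ x, f x ∂μ ≤ M * δ := by
    have := le_of_tendsto_of_tendsto' inner_tendsto
      (((inner_tendsto.const_sub (∫ x, f x ∂μ)).const_mul (c δ)).add_const (M * δ)) (inner_le δ hδ)
    rwa [sub_self, mul_zero, zero_add] at this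
  have integral_nonpos : ∫ x, f x ∂μ ≤ 0 := by
    have : Filter.Tendsto (fun δ => M * δ) (nhdsWithin 0 (Set.Ioi 0)) (nhds 0) :=
      (Continuous.tendsto' (by fun_prop) 0 0 (mul_zero M)).mono_left nhdsWithin_le_nhds
    exact ge_of_tendsto this (eventually_nhdsWithin_of_forall integral_le)
  exact (integral_eq_zero_iff_of_nonneg_ae hf0 hf).1
    (integral_nonpos.antisymm (integral_nonneg_of_ae hf0))

end Exhaustion

section Liouville

variable {n k : ℕ} {a : Fin n → Fin n → Pt n → ℝ} {w h : Pt n → ℝ} {θ : ℝ → ℝ} {α c q κ T R : ℝ}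

lemma aeCover_compl_outerRegion (hα : 0 < α) {μ : Measure (Pt n)} :
    AECover μ Filter.atTop fun j : ℕ => (outerRegion n ((j + 2 : ℝ) ^ α) (j + 2))ᶜ where
  ae_eventually_mem := by
    have radius : Filter.Tendsto (fun j : ℕ => (j + 2 : ℝ)) Filter.atTop Filter.atTop :=
      Filter.tendsto_atTop_add_const_right _ _ tendsto_natCast_atTop_atTop
    refine Filter.Eventually.of_forall fun p => ?_
    filter_upwards [((tendsto_rpow_atTop hα).comp radius).eventually_ge_atTop p.1,
      radius.eventually_ge_atTop (2 * ‖p.2‖)] with j time space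
    exact not_or.2 ⟨time.not_gt, by linarith⟩
  measurableSet _ := measurableSet_outerRegion.compl

lemma IsNonnegSupersolution.mul_setIntegral_cutoffPow_le (hw : IsNonnegSupersolution a h w)
    (hsource : ∀ p ∈ halfSpace n, κ * w p ^ q ≤ h p) (hq : 0 ≤ q) (hθ : IsTimeRamp θ) (hT : 0 < T)
    (hR : 0 < R) (hk : k ≠ 0) :
    κ * ∫ p in halfSpace n, cutoffPow θ (boxCutoff T R) k p * w p ^ q ≤
      ∫ p in halfSpace n, cutoffPow θ (boxCutoff T R) k p * h p := by
  rw [← integral_const_mul]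
  refine integral_mono_ae ((integrable_cutoffPow_boxCutoff_mul hθ hT hR hk
    (hw.contDiffOn.continuousOn.rpow_const fun _ _ => Or.inr hq)).const_mul κ)
    (integrable_cutoffPow_boxCutoff_mul hθ hT hR hk hw.continuousOn_source) ?_
  filter_upwards [ae_restrict_mem (isOpen_halfSpace n).measurableSet] with p hp
  rw [mul_left_comm]
  exact mul_le_mul_of_nonneg_left (hsource p hp)
    (mul_nonneg (hθ.nonneg _) (pow_nonneg boxCutoff_mem_Icc.1 _))

theorem IsNonnegSupersolution.ae_eq_zero_of_rpow_le (ha : IsDegenerateElliptic a)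
    (hgrowth : HasGrowthBound a α c) (hw : IsNonnegSupersolution a h w)
    (hsource : ∀ p ∈ halfSpace n, κ * w p ^ q ≤ h p) (hκ : 0 < κ) (hα : 0 < α) (hc : 0 ≤ c)
    (hq : 1 < q) (hqα : n * (q - 1) ≤ α) (hθ : IsTimeRamp θ) :
    (fun p => θ p.1 * w p ^ q) =ᵐ[volume.restrict (halfSpace n)] 0 := by
  obtain ⟨k, hk, M, bound⟩ :=
    exists_scaled_apriori_bound ha hgrowth hc hq hqα (half_pos hκ)
  have hS := (isOpen_halfSpace n).measurableSet
  have power_continuous : ContinuousOn (fun p => w p ^ q) (halfSpace n) :=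
    hw.contDiffOn.continuousOn.rpow_const fun _ _ => Or.inr (by linarith)
  have power_nonneg (p) (hp : p ∈ halfSpace n) : 0 ≤ w p ^ q := rpow_nonneg (hw.nonneg p hp) q
  have hR (j : ℕ) : (1 : ℝ) < j + 2 := by linarith [(j.cast_nonneg : (0 : ℝ) ≤ j)]
  have hR0 (j : ℕ) : (0 : ℝ) < j + 2 := one_pos.trans (hR j)
  have hT (j : ℕ) : (0 : ℝ) < (j + 2) ^ α := rpow_pos_of_pos (hR0 j) α
  refine ae_eq_zero_of_integral_le_tail (M := M / κ) (c := fun δ => δ ^ (1 - q) / 2)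
    (F := fun (j : ℕ) p => cutoffPow θ (boxCutoff ((j + 2 : ℝ) ^ α) (j + 2)) k p * w p ^ q)
    (aeCover_compl_outerRegion hα)
    (fun j => integrable_cutoffPow_boxCutoff_mul hθ (hT j) (hR0 j) hk power_continuous)
    (fun j => ?_) (fun j => ?_) (fun j => ?_) (fun δ hδ => by positivity) (by norm_num) ?_
  · filter_upwards [ae_restrict_mem hS] with p hp
    exact mul_nonneg (mul_nonneg (hθ.nonneg _) (pow_nonneg boxCutoff_mem_Icc.1 _))
      (power_nonneg p hp)
  · filter_upwards [ae_restrict_mem hS] with p hp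
    exact mul_le_mul_of_nonneg_right (mul_le_of_le_one_right (hθ.nonneg _)
      (pow_le_one₀ boxCutoff_mem_Icc.1 boxCutoff_mem_Icc.2)) (power_nonneg p hp)
  · filter_upwards [ae_restrict_of_ae (ae_restrict_mem hS), ae_restrict_mem
      measurableSet_outerRegion.compl] with p hp hp'
    rw [cutoffPow, boxCutoff_eq_one (hT j) (hR0 j) hp hp', one_pow, mul_one]
  · intro j δ hδ
    have tail := (hw.mul_setIntegral_cutoffPow_le hsource (by linarith) hθ (hT j) (hR0 j) hk).trans
      (bound h w θ hw hθ _ (hR j) δ hδ)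
    rw [compl_compl]
    refine le_of_mul_le_mul_left (tail.trans_eq ?_) hκ
    field_simp

theorem IsNonnegSupersolution.eq_zero_of_rpow_le (ha : IsDegenerateElliptic a)
    (hgrowth : HasGrowthBound a α c) (hw : IsNonnegSupersolution a h w)
    (hsource : ∀ p ∈ halfSpace n, κ * w p ^ q ≤ h p) (hκ : 0 < κ) (hα : 0 < α) (hc : 0 ≤ c)
    (hq : 1 < q) (hqα : n * (q - 1) ≤ α) {p : Pt n} (hp : p ∈ halfSpace n) : w p = 0 := by
  obtain ⟨θ, hθ, hθp⟩ := IsTimeRamp.exists_pos_apply hp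
  have product_continuous : ContinuousOn (fun p => θ p.1 * w p ^ q) (halfSpace n) :=
    (hθ.contDiff.continuous.comp continuous_fst).continuousOn.mul
      (hw.contDiffOn.continuousOn.rpow_const fun _ _ => Or.inr (by linarith))
  have product_eq := Measure.eqOn_open_of_ae_eq
    (hw.ae_eq_zero_of_rpow_le ha hgrowth hsource hκ hα hc hq hqα hθ) (isOpen_halfSpace n)
    product_continuous continuousOn_const hp
  exact ((rpow_eq_zero_iff_of_nonneg (hw.nonneg p hp)).1
    ((mul_eq_zero.1 product_eq).resolve_left hθp.ne')).1

end Liouville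

section Coefficients

lemma locallyIntegrableOn_of_bounded_on_compacts {X : Type*} [TopologicalSpace X]
    [LocallyCompactSpace X] [MeasurableSpace X] {μ : Measure X}
    [IsFiniteMeasureOnCompacts μ] {f : X → ℝ} {U : Set X} (hU : IsLocallyClosed U)
    (hf : Measurable f) (hbdd : ∀ K, IsCompact K → K ⊆ U → ∃ M, ∀ p ∈ K, |f p| ≤ M) :
    LocallyIntegrableOn f U μ := by
  refine (locallyIntegrableOn_iff hU).2 fun K hKU hK => ?_
  obtain ⟨M, hM⟩ := hbdd K hK hKU
  exact Measure.integrableOn_of_bounded hK.measure_lt_top.ne hf.aestronglyMeasurable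
    ((ae_restrict_iff (measurableSet_le hf.norm measurable_const)).2
      (Filter.Eventually.of_forall hM))

variable {n : ℕ} {a : Fin n → Fin n → Pt n → ℝ} {A : Pt n → ℝ} {α c : ℝ} {p : Pt n}

lemma isPosSemidef_coeffForm (hsymm : ∀ i j, a i j p = a j i p)
    (hform : ∀ ξ : Xn n, 0 ≤ ∑ i, ∑ j, a i j p * ξ i * ξ j) : (coeffForm a p).IsPosSemidef where
  eq ξ η := by
    rw [coeffForm_apply, coeffForm_apply, Finset.sum_comm]
    exact Finset.sum_congr rfl fun i _ => Finset.sum_congr rfl fun j _ => by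
      rw [hsymm, mul_right_comm]
  nonneg ξ := (hform (WithLp.toLp 2 ξ)).trans_eq (coeffForm_apply ξ ξ).symm

lemma isDegenerateElliptic_of_bounded_on_compacts (hmeas : ∀ i j, Measurable (a i j))
    (hbdd : ∀ i j, ∀ K : Set (Pt n), IsCompact K → K ⊆ halfSpace n → ∃ M, ∀ p ∈ K, |a i j p| ≤ M)
    (hsymm : ∀ i j, ∀ᵐ p ∂volume.restrict (halfSpace n), a i j p = a j i p)
    (hform : ∀ᵐ p ∂volume.restrict (halfSpace n),
      ∀ ξ : Xn n, 0 ≤ ∑ i, ∑ j, a i j p * ξ i * ξ j) : IsDegenerateElliptic a where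
  locallyIntegrableOn i j := locallyIntegrableOn_of_bounded_on_compacts
    (isOpen_halfSpace n).isLocallyClosed (hmeas i j) (hbdd i j)
  ae_isPosSemidef := by
    filter_upwards [hform, ae_all_iff.2 fun i => ae_all_iff.2 (hsymm i)] with p hp hsymm
    exact isPosSemidef_coeffForm hsymm hp

lemma Cond8.hasGrowthBound (h : Cond8 A α c) (hform : ∀ᵐ p ∂volume.restrict (halfSpace n),
      ∀ ξ : Xn n, ∑ i, ∑ j, a i j p * ξ i * ξ j ≤ A p * ‖ξ‖ ^ 2) :
    HasGrowthBound a α c := fun R hR => by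
  have hS := (isOpen_halfSpace n).measurableSet
  have shell : MeasurableSet {p : Pt n | 0 < p.1 ∧ R / 2 < ‖p.2‖ ∧ ‖p.2‖ < R} := by
    measurability
  filter_upwards [hform, ae_restrict_of_ae ((ae_restrict_iff' shell).1 (h R hR)),
    ae_restrict_mem hS] with p hp hA hpS hpR ξ
  rw [coeffForm_apply]
  exact (hp (WithLp.toLp 2 ξ)).trans
    (mul_le_mul_of_nonneg_right (hA ⟨hpS, hpR⟩) (sq_nonneg _))

end Coefficients

theorem fujita_comparison_principle_general
    {n : ℕ} {α c q : ℝ} (hα : 0 < α) (hc : 0 ≤ c) (hq : 1 < q) (hqα : n * (q - 1) ≤ α)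
    {a : Fin n → Fin n → Pt n → ℝ} (ha : IsDegenerateElliptic a) (hgrowth : HasGrowthBound a α c)
    {u v : Pt n → ℝ} (hu : ContDiffOn ℝ 1 u (halfSpace n)) (hv : ContDiffOn ℝ 1 v (halfSpace n))
    (hsol : WeakSolPair a q u v) (huv : ∀ p ∈ halfSpace n, v p ≤ u p) :
    ∀ p ∈ halfSpace n, u p = v p := fun _ hp =>
  sub_eq_zero.1 <|
    (hsol.isNonnegSupersolution_sub hq.le ha.locallyIntegrableOn hu hv huv).eq_zero_of_rpow_le ha
      hgrowth (fun p hp => two_rpow_mul_sub_rpow_le_oddPow_sub hq.le (huv p hp))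
      (rpow_pos_of_pos two_pos _) hα hc hq hqα hp

/-- the Fujita comparison principle for the Cauchy problem with
arbitrary initial data (Theorem 4). -/
theorem fujita_comparison_principle
    (n : ℕ) (hn : 1 ≤ n) (α c q : ℝ) (hα : 0 < α) (hc : 0 < c)
    (hq1 : 1 < q) (hq2 : q ≤ 1 + α / n)
    (a : Fin n → Fin n → Pt n → ℝ) (A : Pt n → ℝ)
    (ha_meas : ∀ i j, Measurable (a i j))
    (ha_locbdd : ∀ i j, ∀ K : Set (Pt n), IsCompact K → K ⊆ halfSpace n →
      ∃ M, ∀ p ∈ K, |a i j p| ≤ M)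
    (ha_symm : ∀ i j, ∀ᵐ p ∂(volume.restrict (halfSpace n)), a i j p = a j i p)
    (hA_meas : Measurable A)
    (hA_nonneg : ∀ p, 0 ≤ A p)
    (hA_locbdd : ∀ K : Set (Pt n), IsCompact K → K ⊆ halfSpace n →
      ∃ M, ∀ p ∈ K, A p ≤ M)
    (hform : ∀ᵐ p ∂(volume.restrict (halfSpace n)), ∀ ξ : Xn n,
      0 ≤ ∑ i, ∑ j, a i j p * ξ i * ξ j ∧
      ∑ i, ∑ j, a i j p * ξ i * ξ j ≤ A p * ‖ξ‖ ^ 2)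
    (hcond8 : Cond8 A α c)
    (u v : Pt n → ℝ)
    -- `u` and `v` are continuous on `[0,∞) × ℝⁿ` (arbitrary initial data
    -- `u(0,·)`, `v(0,·)`: no condition relates them)
    (hu_cont : ContinuousOn u {p : Pt n | 0 ≤ p.1})
    (hv_cont : ContinuousOn v {p : Pt n | 0 ≤ p.1})
    (hu : ContDiffOn ℝ 1 u (halfSpace n)) (hv : ContDiffOn ℝ 1 v (halfSpace n))
    (hu_int : LocallyIntegrableOn (fun p => |u p| ^ q) (halfSpace n) volume)
    (hv_int : LocallyIntegrableOn (fun p => |v p| ^ q) (halfSpace n) volume)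
    (hsol : WeakSolPair a q u v)
    (huv : ∀ p ∈ halfSpace n, v p ≤ u p) :
    ∀ p ∈ halfSpace n, u p = v p := by
  have critical : n * (q - 1) ≤ α :=
    (le_div_iff₀' (Nat.cast_pos.2 hn)).1 (sub_le_iff_le_add'.2 hq2)
  exact fujita_comparison_principle_general hα hc.le hq1 critical
    (isDegenerateElliptic_of_bounded_on_compacts ha_meas ha_locbdd ha_symm
      (hform.mono fun _ hp ξ => (hp ξ).1))
    (hcond8.hasGrowthBound (hform.mono fun _ hp ξ => (hp ξ).2)) hu hv hsol huv
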